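/- arXiv:2203.03848 — 3 statements merged into one kernel-verified Lean document; each statement's English description precedes it below -/
import Mathlib

section
/- Let k be a field with char(k) ≠ 2 and let a, b ∈ kˣ be such that the quaternion algebra Q = (a,b)_k is a division ring. Let K = k(t₁,t₂,t₃) be the fraction field of the polynomial ring k[t₁,t₂,t₃]. Then the 10-dimensional diagonal quadratic form over K given by q' = ⟨-a, -b, ab⟩ ⊥ ⟨t₁, t₂, -t₁t₂⟩ ⊥ t₃·⟨1, -t₁, -t₂, t₁t₂⟩, i.e. the diagonal form ⟨-a, -b, ab, t₁, t₂, -t₁t₂, t₃, -t₃t₁, -t₃t₂, t₃t₁t₂⟩, is anisotropic, has trivial signed discriminant (−det(q') is a square in K), and its Clifford algebra C(q') is Brauer equivalent to the quaternion algebra (a,b)_K: M_r(C(q')) ≅ M_s((a,b)_K) as K-algebras for some r, s ≥ 1. -/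
/-!
STATEMENT 6: Let `k` be a field with `char k ≠ 2` and `a, b ∈ kˣ` with `(a,b)_k` a
division ring.  Let `K = k(t₁,t₂,t₃)`.  Then the ten-dimensional diagonal form
`q' = ⟨-a, -b, ab, t₁, t₂, -t₁t₂, t₃, -t₃t₁, -t₃t₂, t₃t₁t₂⟩` over `K` is anisotropic,
has trivial signed discriminant (`-det(q')` is a square in `K`), and its Clifford
algebra is Brauer equivalent to `(a,b)_K`.
-/

open scoped Quaternion

universe u

set_option linter.unusedSimpArgs false

theorem aniso_key {k : Type*} [Field k] {ι : Type*} [Fintype ι] (c : ι → k)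
    (m : ι → (Fin 3 →₀ ℕ))
    (hc : ∀ x : ι → k, ∑ i, c i * x i ^ 2 = 0 →
      (∀ i j, x i ≠ 0 → x j ≠ 0 → ∀ s, m i s % 2 = m j s % 2) → x = 0)
    (v : ι → MvPolynomial (Fin 3) k)
    (hv : ∑ i, MvPolynomial.monomial (m i) (c i) * v i ^ 2 = 0) : v = 0 := by
  classical
  by_contra hne
  obtain ⟨i₁, hi₁⟩ := Function.ne_iff.mp hne
  let o : MonomialOrder (Fin 3) := MonomialOrder.lex
  let D : ι → (Fin 3 →₀ ℕ) := fun i => m i + 2 • o.degree (v i)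
  obtain ⟨i₀, hi₀, hmax⟩ := Finset.exists_max_image (Finset.univ.filter fun i => v i ≠ 0)
    (fun i => o.toSyn (D i)) ⟨i₁, by simpa using hi₁⟩
  simp only [Finset.mem_filter, Finset.mem_univ, true_and] at hi₀ hmax
  let x : ι → k := fun i => if D i = D i₀ then o.leadingCoeff (v i) else 0
  have hx0 : x i₀ ≠ 0 := by
    simp only [x, if_true]
    exact o.leadingCoeff_ne_zero_iff.mpr hi₀
  have hx : x = 0 := by
    apply hc
    · have h := congrArg (MvPolynomial.coeff (D i₀)) hv
      rw [MvPolynomial.coeff_sum, MvPolynomial.coeff_zero] at h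
      rw [← h]
      refine Finset.sum_congr rfl fun i _ => ?_
      by_cases hD : D i = D i₀
      · simp only [x, if_pos hD]
        rw [← hD, MvPolynomial.coeff_monomial_mul, o.coeff_pow_nsmul_degree]
      · simp only [x, if_neg hD]
        by_cases hvi : v i = 0
        · simp [hvi]
        · have hlt : o.toSyn (D i) < o.toSyn (D i₀) :=
            lt_of_le_of_ne (hmax i hvi) fun h => hD (o.toSyn.injective h)
          rw [o.coeff_eq_zero_of_lt]
          · simp
          · refine lt_of_le_of_lt ?_ hlt
            refine (o.degree_mul_le).trans ?_
            rw [map_add, map_add]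
            exact add_le_add (o.degree_monomial_le _) (o.degree_pow_le 2)
    · intro i j hi hj s
      have h1 : D i = D i₀ := by by_contra h; simp [x, h] at hi
      have h2 : D j = D i₀ := by by_contra h; simp [x, h] at hj
      have h3 := DFunLike.congr_fun (h1.trans h2.symm) s
      simp only [D, Finsupp.add_apply, Finsupp.smul_apply, smul_eq_mul] at h3
      omega
  exact hx0 (congrFun hx i₀)

/-- pure quaternions -/
theorem aniso_three {k : Type*} [Field k] (a b : k) 
    (hdiv : ∀ x : ℍ[k, a, b], x ≠ 0 → IsUnit x) (x y z : k)
    (h : -a * x ^ 2 + -b * y ^ 2 + a * b * z ^ 2 = 0) : x = 0 ∧ y = 0 ∧ z = 0 := by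
  by_contra hne
  let q : ℍ[k, a, b] := ⟨0, x, y, z⟩
  have hq : q ≠ 0 := by
    intro hq
    apply hne
    have := QuaternionAlgebra.ext_iff.mp hq
    simpa [q] using this
  have hqq : q * q = 0 := by
    ext <;> simp [q]
    · linear_combination -h
    · ring
    · ring
    · ring
  have := (hdiv q hq).mul_left_cancel (hqq.trans (mul_zero q).symm)
  exact hq this

theorem aniso_main {k : Type u} [Field k] (a b : k)
    (hdiv : ∀ x : ℍ[k, a, b], x ≠ 0 → IsUnit x) :
    let K := FractionRing (MvPolynomial (Fin 3) k)
    let t : Fin 3 → K := fun i => algebraMap (MvPolynomial (Fin 3) k) K (MvPolynomial.X i)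
    let a' : K := algebraMap k K a
    let b' : K := algebraMap k K b
    let w : Fin 10 → K :=
      ![-a', -b', a' * b', t 0, t 1, -(t 0 * t 1),
        t 2, -(t 2 * t 0), -(t 2 * t 1), t 2 * t 0 * t 1]
    (QuadraticMap.weightedSumSquares K w).Anisotropic := by
  intro K t a' b' w v hv
  let R := MvPolynomial (Fin 3) k
  let c : Fin 10 → k := ![-a, -b, a * b, 1, 1, -1, 1, -1, -1, 1]
  let e : Fin 3 → (Fin 3 →₀ ℕ) := fun s => Finsupp.single s 1
  let m : Fin 10 → (Fin 3 →₀ ℕ) := ![0, 0, 0, e 0, e 1, e 0 + e 1, e 2, e 2 + e 0, e 2 + e 1,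
    e 2 + e 0 + e 1]
  have hX : ∀ s : Fin 3, (MvPolynomial.X s : R) = MvPolynomial.monomial (e s) 1 := fun s => rfl
  have hC : ∀ r : k, algebraMap k K r = algebraMap R K (MvPolynomial.monomial 0 r) := fun r => by
    rw [IsScalarTower.algebraMap_apply k R K]; rfl
  have hw : ∀ i, w i = algebraMap R K (MvPolynomial.monomial (m i) (c i)) := by
    intro i
    have hneg : ∀ (d : Fin 3 →₀ ℕ) (r : k), -algebraMap R K (MvPolynomial.monomial d r) =
        algebraMap R K (MvPolynomial.monomial d (-r)) := fun d r => by
      rw [map_neg, map_neg]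
    have hmul : ∀ (d d' : Fin 3 →₀ ℕ) (r r' : k), algebraMap R K (MvPolynomial.monomial d r) *
        algebraMap R K (MvPolynomial.monomial d' r') =
        algebraMap R K (MvPolynomial.monomial (d + d') (r * r')) := fun d d' r r' => by
      rw [← map_mul, MvPolynomial.monomial_mul]
    fin_cases i <;> dsimp [w, m, c, a', b', t] <;>
    simp only [hC, hX, hneg, hmul, mul_one, add_zero, R] <;> rfl
  obtain ⟨d, hd⟩ := IsLocalization.exist_integer_multiples_of_finite (nonZeroDivisors R) v
  choose p hp using hd
  have hd0 : algebraMap R K d ≠ 0 := by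
    simp
  have hp0 : p = 0 := by
    apply aniso_key c m
    · intro x hx hpar
      have hzero : ∀ i : Fin 10, 3 ≤ i → x i = 0 := by
        intro i hi
        by_contra hxi
        have hoth : ∀ j, j ≠ i → x j = 0 := by
          intro j hj
          by_contra hxj
          have h0 := hpar i j hxi hxj 0
          have h1 := hpar i j hxi hxj 1
          have h2 := hpar i j hxi hxj 2
          revert h0 h1 h2
          fin_cases i <;> fin_cases j <;> simp [m, e] at hi hj ⊢
        rw [Finset.sum_eq_single i (fun j _ hj => by simp [hoth j hj]) (by simp)] at hx
        revert hx hi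
        fin_cases i <;> simp [c] <;> simpa using hxi
      have h3 : -a * x 0 ^ 2 + -b * x 1 ^ 2 + a * b * x 2 ^ 2 = 0 := by
        rw [← Finset.sum_subset (Finset.subset_univ ({0, 1, 2} : Finset (Fin 10)))] at hx
        · rw [← hx]
          simp [c, add_assoc]
        · intro i _ hi
          rw [hzero i, zero_pow two_ne_zero, mul_zero]
          revert hi
          fin_cases i <;> simp
      obtain ⟨h0, h1, h2⟩ := aniso_three a b hdiv _ _ _ h3
      funext i
      by_cases hi : 3 ≤ i
      · exact hzero i hi
      · fin_cases i <;> first | exact h0 | exact h1 | exact h2 | simp at hi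
    · apply IsFractionRing.injective R K
      rw [map_sum, map_zero]
      rw [QuadraticMap.weightedSumSquares_apply] at hv
      have : ∑ i, algebraMap R K (MvPolynomial.monomial (m i) (c i) * p i ^ 2)
          = algebraMap R K d ^ 2 * ∑ i, w i • (v i * v i) := by
        rw [Finset.mul_sum]
        refine Finset.sum_congr rfl fun i _ => ?_
        rw [map_mul, map_pow, hp, hw, smul_eq_mul, Algebra.smul_def]
        ring
      rw [this, hv, mul_zero]
  funext i
  have := hp i
  rw [hp0, Algebra.smul_def] at this
  simpa [hd0] using this

/-- A system of `N` generators of a `K`-algebra, grouped in anticommuting consecutive pairs, with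
elements from different pairs commuting. -/
structure GenSys (K T : Type*) [Field K] [Ring T] [Algebra K T] (N : ℕ) (c : ℕ → K)
    (g : ℕ → T) : Prop where
  sq : ∀ n < N, g n * g n = c n • (1 : T)
  anti : ∀ m n, n < N → m < n → m / 2 = n / 2 → g n * g m = -(g m * g n)
  comm : ∀ m n, n < N → m < n → m / 2 ≠ n / 2 → g n * g m = g m * g n
  gen : ∀ S : Subalgebra K T, (∀ n < N, g n ∈ S) → S = ⊤

def stepFun {α : Type*} (x y : α) (f : ℕ → α) : ℕ → α
  | 0 => x
  | 1 => y
  | n + 2 => f n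

theorem GenSys.base {K : Type*} [Field K] (a b : K) :
    GenSys K ℍ[K, a, b] 2 (stepFun a b 0)
      (stepFun (⟨0, 1, 0, 0⟩ : ℍ[K, a, b]) ⟨0, 0, 1, 0⟩ 0) where
  sq := by
    intro n hn
    interval_cases n <;> ext <;> simp [stepFun]
  anti := by
    intro m n hn hmn _
    obtain ⟨rfl, rfl⟩ : m = 0 ∧ n = 1 := by omega
    ext <;> simp [stepFun]
  comm := by
    intro m n hn hmn h
    omega
  gen := by
    intro S hS
    have hi := hS 0 (by norm_num)
    have hj := hS 1 (by norm_num)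
    rw [eq_top_iff]
    intro q _
    have : q = q.re • 1 + q.imI • stepFun (⟨0, 1, 0, 0⟩ : ℍ[K, a, b]) ⟨0, 0, 1, 0⟩ 0 0 +
        q.imJ • stepFun (⟨0, 1, 0, 0⟩ : ℍ[K, a, b]) ⟨0, 0, 1, 0⟩ 0 1 +
        q.imK • (stepFun (⟨0, 1, 0, 0⟩ : ℍ[K, a, b]) ⟨0, 0, 1, 0⟩ 0 0 *
          stepFun (⟨0, 1, 0, 0⟩ : ℍ[K, a, b]) ⟨0, 0, 1, 0⟩ 0 1) := by
      ext <;> simp [stepFun]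
    rw [this]
    exact S.add_mem (S.add_mem (S.add_mem (S.smul_mem S.one_mem _) (S.smul_mem hi _))
      (S.smul_mem hj _)) (S.smul_mem (S.mul_mem hi hj) _)

theorem GenSys.step {K : Type*} [Field K] (h2 : (2 : K) ≠ 0) {T : Type*} [Ring T] [Algebra K T]
    {N : ℕ} {c : ℕ → K} {g : ℕ → T} (h : GenSys K T N c g) (d : K) (hd : d ≠ 0) :
    GenSys K (Matrix (Fin 2) (Fin 2) T) (N + 2) (stepFun 1 d c)
      (stepFun !![1, 0; 0, -1] !![0, 1; d • 1, 0]
        (fun n => Matrix.scalarAlgHom (Fin 2) K (g n))) where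
  sq := by
    intro n hn
    match n, hn with
    | 0, _ => ext i j; fin_cases i <;> fin_cases j <;> simp [stepFun]
    | 1, _ => ext i j; fin_cases i <;> fin_cases j <;> simp [stepFun]
    | n + 2, hn =>
      simp only [stepFun]
      rw [← map_mul, h.sq n (by omega), map_smul, map_one]
  anti := by
    intro m n hn hmn heq
    match m, n, hn, hmn, heq with
    | 0, 1, _, _, _ => ext i j; fin_cases i <;> fin_cases j <;> simp [stepFun]
    | 0, n + 2, _, _, _ => omega
    | 1, n + 2, _, _, _ => omega
    | m + 2, n + 2, _, _, _ =>
      simp only [stepFun]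
      rw [← map_mul, h.anti m n (by omega) (by omega) (by omega), map_neg, map_mul]
  comm := by
    intro m n hn hmn heq
    match m, n, hn, hmn, heq with
    | 0, 1, _, _, _ => omega
    | 0, n + 2, _, _, _ => ext i j; fin_cases i <;> fin_cases j <;> simp [stepFun]
    | 1, n + 2, _, _, _ => ext i j; fin_cases i <;> fin_cases j <;> simp [stepFun]
    | m + 2, n + 2, _, _, _ =>
      simp only [stepFun]
      rw [← map_mul, h.comm m n (by omega) (by omega) (by omega), map_mul]
  gen := by
    intro S hS
    have hX : !![1, 0; 0, -1] ∈ S := hS 0 (by omega)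
    have hY : !![0, 1; d • 1, 0] ∈ S := hS 1 (by omega)
    have hsc : ∀ t : T, Matrix.scalarAlgHom (Fin 2) K t ∈ S := by
      have := h.gen (S.comap (Matrix.scalarAlgHom (Fin 2) K)) (fun n hn => hS (n + 2) (by omega))
      intro t
      have ht : t ∈ S.comap (Matrix.scalarAlgHom (Fin 2) K) := by rw [this]; trivial
      exact ht
    have h00 : (!![1, 0; 0, 0] : Matrix (Fin 2) (Fin 2) T) ∈ S := by
      have : (!![1, 0; 0, 0] : Matrix (Fin 2) (Fin 2) T) = (2 : K)⁻¹ • (1 + !![1, 0; 0, -1]) := by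
        have h3 : (2⁻¹ : K) • (1 + 1 : T) = 1 := by
          rw [smul_add, ← add_smul, show (2⁻¹ + 2⁻¹ : K) = 1 by field_simp; norm_num, one_smul]
        ext i j; fin_cases i <;> fin_cases j <;> simp [-smul_add, h3]
      rw [this]
      exact S.smul_mem (S.add_mem S.one_mem hX) _
    have h11 : (!![0, 0; 0, 1] : Matrix (Fin 2) (Fin 2) T) ∈ S := by
      have : (!![0, 0; 0, 1] : Matrix (Fin 2) (Fin 2) T) = 1 - !![1, 0; 0, 0] := by
        ext i j; fin_cases i <;> fin_cases j <;> simp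
      rw [this]
      exact S.sub_mem S.one_mem h00
    have h01 : (!![0, 1; 0, 0] : Matrix (Fin 2) (Fin 2) T) ∈ S := by
      have : (!![0, 1; 0, 0] : Matrix (Fin 2) (Fin 2) T) = !![1, 0; 0, 0] * !![0, 1; d • 1, 0] := by
        ext i j; fin_cases i <;> fin_cases j <;> simp
      rw [this]
      exact S.mul_mem h00 hY
    have h10 : (!![0, 0; 1, 0] : Matrix (Fin 2) (Fin 2) T) ∈ S := by
      have : (!![0, 0; 1, 0] : Matrix (Fin 2) (Fin 2) T) =
          d⁻¹ • (!![0, 0; 0, 1] * !![0, 1; d • 1, 0]) := by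
        ext i j; fin_cases i <;> fin_cases j <;> simp [smul_smul, hd]
      rw [this]
      exact S.smul_mem (S.mul_mem h11 hY) _
    rw [eq_top_iff]
    intro A _
    have : A = Matrix.scalarAlgHom (Fin 2) K (A 0 0) * !![1, 0; 0, 0] +
        Matrix.scalarAlgHom (Fin 2) K (A 0 1) * !![0, 1; 0, 0] +
        Matrix.scalarAlgHom (Fin 2) K (A 1 0) * !![0, 0; 1, 0] +
        Matrix.scalarAlgHom (Fin 2) K (A 1 1) * !![0, 0; 0, 1] := by
      ext i j; fin_cases i <;> fin_cases j <;> simp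
    rw [this]
    exact S.add_mem (S.add_mem (S.add_mem (S.mul_mem (hsc _) h00) (S.mul_mem (hsc _) h01))
      (S.mul_mem (hsc _) h10)) (S.mul_mem (hsc _) h11)

/-- Orthogonal generators give a Clifford map. -/
theorem clifford_sq {K : Type*} [Field K] (h2 : (2 : K) ≠ 0) {T : Type*} [Ring T] [Algebra K T]
    {n : ℕ} (w : Fin n → K) (e : Fin n → T) (hsq : ∀ i, e i * e i = w i • (1 : T))
    (hanti : ∀ i j, i < j → e j * e i = -(e i * e j)) (v : Fin n → K) :
    (Fintype.linearCombination K e v) * (Fintype.linearCombination K e v) =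
      algebraMap K T (QuadraticMap.weightedSumSquares K w v) := by
  have key : ∀ i j, e i * e j + e j * e i = if i = j then (2 * w i) • (1 : T) else 0 := by
    intro i j
    rcases lt_trichotomy i j with h | h | h
    · rw [hanti i j h, if_neg h.ne, add_neg_cancel]
    · subst h
      rw [hsq, if_pos rfl, ← add_smul, two_mul]
    · rw [hanti j i h, if_neg h.ne', neg_add_cancel]
  have hA : (Fintype.linearCombination K e v) * (Fintype.linearCombination K e v) =
      ∑ i, ∑ j, (v i * v j) • (e i * e j) := by
    rw [Fintype.linearCombination_apply, Finset.sum_mul_sum]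
    simp only [smul_mul_smul_comm]
  have hB : (Fintype.linearCombination K e v) * (Fintype.linearCombination K e v) =
      ∑ i, ∑ j, (v i * v j) • (e j * e i) := by
    rw [hA, Finset.sum_comm]
    exact Finset.sum_congr rfl fun i _ => Finset.sum_congr rfl fun j _ => by
      rw [mul_comm (v j)]
  have hAB : (2 : K) • ((Fintype.linearCombination K e v) * (Fintype.linearCombination K e v)) =
      (2 : K) • algebraMap K T (QuadraticMap.weightedSumSquares K w v) := by
    rw [two_smul]
    nth_rewrite 1 [hA]
    rw [hB]
    simp only [← Finset.sum_add_distrib, ← smul_add, key, smul_ite, smul_zero,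
      Finset.sum_ite_eq, Finset.mem_univ, if_true, smul_smul, ← Finset.sum_smul]
    rw [QuadraticMap.weightedSumSquares_apply, Algebra.algebraMap_eq_smul_one, smul_smul,
      Finset.mul_sum]
    congr 1
    refine Finset.sum_congr rfl fun i _ => ?_
    rw [smul_eq_mul]; ring
  exact smul_right_injective T h2 hAB

theorem mem_of_smul {K : Type*} [Field K] {T : Type*} [Ring T] [Algebra K T] (S : Subalgebra K T)
    {x y : T} {s : K} (hs : s ≠ 0) (hy : y ∈ S) (h : y = s • x) : x ∈ S := by
  have := S.smul_mem hy s⁻¹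
  rwa [h, smul_smul, inv_mul_cancel₀ hs, one_smul] at this

set_option maxHeartbeats 4000000 in
theorem clifford_equiv {K : Type*} [Field K] (h2 : (2 : K) ≠ 0) {T : Type*} [Ring T] [Algebra K T]
    (a b t₁ t₂ t₃ : K) (ha : a ≠ 0) (hb : b ≠ 0) (h₁ : t₁ ≠ 0) (h₂ : t₂ ≠ 0) (h₃ : t₃ ≠ 0)
    {c : ℕ → K} {g : ℕ → T} (h : GenSys K T 10 c g)
    (c0 : c 0 = 1) (c1 : c 1 = -t₃) (c2 : c 2 = 1) (c3 : c 3 = -1) (c4 : c 4 = 1) (c5 : c 5 = t₂)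
    (c6 : c 6 = 1) (c7 : c 7 = t₁) (c8 : c 8 = a) (c9 : c 9 = b)
    (hfr : Module.finrank K T = 1024) :
    Nonempty (CliffordAlgebra (QuadraticMap.weightedSumSquares K
      ![-a, -b, a * b, t₁, t₂, -(t₁ * t₂), t₃, -(t₃ * t₁), -(t₃ * t₂), t₃ * t₁ * t₂]) ≃ₐ[K] T) := by
  set w : Fin 10 → K :=
    ![-a, -b, a * b, t₁, t₂, -(t₁ * t₂), t₃, -(t₃ * t₁), -(t₃ * t₂), t₃ * t₁ * t₂] with hw
  let e : Fin 10 → T := ![g 3 * g 0 * g 8, g 3 * g 0 * g 9, g 3 * g 0 * g 8 * g 9,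
    g 2 * g 0 * g 7, g 2 * g 0 * g 6 * g 5, g 2 * g 0 * g 7 * g 6 * g 5,
    g 1 * g 0, g 1 * g 7 * g 4, g 1 * g 5, g 1 * g 7 * g 4 * g 5]
  have sq' : ∀ n x, n < 10 → g n * (g n * x) = c n • x := fun n x hn => by
    rw [← mul_assoc, h.sq n hn, smul_mul_assoc, one_mul]
  have anti' : ∀ m n x, n < 10 → m < n → m / 2 = n / 2 → g n * (g m * x) = -(g m * (g n * x)) :=
    fun m n x h1 h2 h3 => by rw [← mul_assoc, h.anti m n h1 h2 h3, neg_mul, mul_assoc]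
  have comm' : ∀ m n x, n < 10 → m < n → m / 2 ≠ n / 2 → g n * (g m * x) = g m * (g n * x) :=
    fun m n x h1 h2 h3 => by rw [← mul_assoc, h.comm m n h1 h2 h3, mul_assoc]
  have hsq : ∀ i, e i * e i = w i • (1 : T) := by
    intro i
    fin_cases i <;> simp [e, w, mul_assoc, h.sq, h.anti, h.comm, sq', anti', comm', smul_smul,
      c0, c1, c2, c3, c4, c5, c6, c7, c8, c9] <;> (congr 1; ring)
  have hanti : ∀ i j, i < j → e j * e i = -(e i * e j) := by
    intro i j hij
    fin_cases i <;> fin_cases j <;> first | (exfalso; revert hij; decide) | skip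
    all_goals simp [e, mul_assoc, h.sq, h.anti, h.comm, sq', anti', comm', smul_smul,
      c0, c1, c2, c3, c4, c5, c6, c7, c8, c9]
  let f := CliffordAlgebra.lift (QuadraticMap.weightedSumSquares K w)
    ⟨Fintype.linearCombination K e, clifford_sq h2 w e hsq hanti⟩
  let S := f.range
  have he : ∀ i, e i ∈ S := fun i =>
    ⟨CliffordAlgebra.ι _ (Pi.single i 1), by
      simp only [f, AlgHom.toRingHom_eq_coe, RingHom.coe_coe, CliffordAlgebra.lift_ι_apply,
        Fintype.linearCombination_apply_single, one_smul]⟩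
  have hz1 : g 3 * g 0 ∈ S := by
    refine mem_of_smul S (mul_ne_zero ha hb)
      (S.mul_mem (S.mul_mem (he 0) (he 1)) (he 2)) ?_
    simp [e, mul_assoc, h.sq, h.anti, h.comm, sq', anti', comm', smul_smul,
      c0, c1, c2, c3, c4, c5, c6, c7, c8, c9]
    rw [mul_comm]
  have hz2 : g 2 * g 0 ∈ S := by
    refine mem_of_smul S (neg_ne_zero.mpr (mul_ne_zero h₁ h₂))
      (S.mul_mem (S.mul_mem (he 3) (he 4)) (he 5)) ?_
    simp [e, mul_assoc, h.sq, h.anti, h.comm, sq', anti', comm', smul_smul,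
      c0, c1, c2, c3, c4, c5, c6, c7, c8, c9]
  have hg8 : g 8 ∈ S := by
    refine mem_of_smul S (neg_ne_zero.mpr one_ne_zero) (S.mul_mem hz1 (he 0)) ?_
    simp [e, mul_assoc, h.sq, h.anti, h.comm, sq', anti', comm', smul_smul,
      c0, c1, c2, c3, c4, c5, c6, c7, c8, c9]
  have hg9 : g 9 ∈ S := by
    refine mem_of_smul S (neg_ne_zero.mpr one_ne_zero) (S.mul_mem hz1 (he 1)) ?_
    simp [e, mul_assoc, h.sq, h.anti, h.comm, sq', anti', comm', smul_smul,
      c0, c1, c2, c3, c4, c5, c6, c7, c8, c9]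
  have hg7 : g 7 ∈ S := by
    refine mem_of_smul S one_ne_zero (S.mul_mem hz2 (he 3)) ?_
    simp [e, mul_assoc, h.sq, h.anti, h.comm, sq', anti', comm', smul_smul,
      c0, c1, c2, c3, c4, c5, c6, c7, c8, c9]
  have hj2 : g 6 * g 5 ∈ S := by
    refine mem_of_smul S one_ne_zero (S.mul_mem hz2 (he 4)) ?_
    simp [e, mul_assoc, h.sq, h.anti, h.comm, sq', anti', comm', smul_smul,
      c0, c1, c2, c3, c4, c5, c6, c7, c8, c9]
  have hg0 : g 0 ∈ S := by
    refine mem_of_smul S (mul_ne_zero (mul_ne_zero h₃ h₃) (mul_ne_zero h₁ h₂))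
      (S.mul_mem (S.mul_mem (S.mul_mem (he 6) (he 7)) (he 8)) (he 9)) ?_
    simp [e, mul_assoc, h.sq, h.anti, h.comm, sq', anti', comm', smul_smul,
      c0, c1, c2, c3, c4, c5, c6, c7, c8, c9]
    try (congr 1; ring)
  have hg3 : g 3 ∈ S := by
    refine mem_of_smul S one_ne_zero (S.mul_mem hz1 hg0) ?_
    simp [mul_assoc, h.sq, c0]
  have hg2 : g 2 ∈ S := by
    refine mem_of_smul S one_ne_zero (S.mul_mem hz2 hg0) ?_
    simp [mul_assoc, h.sq, c0]
  have hg1 : g 1 ∈ S := by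
    refine mem_of_smul S one_ne_zero (S.mul_mem (he 6) hg0) ?_
    simp [e, mul_assoc, h.sq, c0]
  have hg5 : g 5 ∈ S := by
    refine mem_of_smul S (neg_ne_zero.mpr h₃) (S.mul_mem hg1 (he 8)) ?_
    simp [e, sq', c1]
  have hg6 : g 6 ∈ S := by
    refine mem_of_smul S h₂ (S.mul_mem hj2 hg5) ?_
    simp [mul_assoc, h.sq, c5]
  have hg4 : g 4 ∈ S := by
    refine mem_of_smul S (mul_ne_zero h₁ (neg_ne_zero.mpr h₃))
      (S.mul_mem hg7 (S.mul_mem hg1 (he 7))) ?_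
    simp [e, mul_assoc, h.sq, h.anti, h.comm, sq', anti', comm', smul_smul,
      c0, c1, c2, c3, c4, c5, c6, c7, c8, c9]
    try (congr 1; ring)
  have htop : f.range = ⊤ := by
    apply h.gen
    intro n hn
    interval_cases n <;> assumption
  have hsurj : Function.Surjective f := AlgHom.range_eq_top f |>.mp htop
  haveI : Invertible (2 : K) := invertibleOfNonzero h2
  let B := ((Pi.basisFun K (Fin 10)).ExteriorAlgebra).map
    (CliffordAlgebra.equivExterior (QuadraticMap.weightedSumSquares K w)).symm
  have hfin : Module.finrank K (CliffordAlgebra (QuadraticMap.weightedSumSquares K w)) = 1024 := by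
    rw [Module.finrank_eq_card_basis B]
    simp
  have : Module.Finite K (CliffordAlgebra (QuadraticMap.weightedSumSquares K w)) :=
    Module.Finite.of_basis B
  have : Module.Finite K T := Module.finite_of_finrank_pos (by rw [hfr]; norm_num)
  have hinj : Function.Injective f :=
    (LinearMap.injective_iff_surjective_of_finrank_eq_finrank (f := f.toLinearMap)
      (hfin.trans hfr.symm)).mpr hsurj
  exact ⟨AlgEquiv.ofBijective f ⟨hinj, hsurj⟩⟩

theorem clifford_main {K : Type*} [Field K] (h2 : (2 : K) ≠ 0)
    (a b t₁ t₂ t₃ : K) (ha : a ≠ 0) (hb : b ≠ 0) (h₁ : t₁ ≠ 0) (h₂ : t₂ ≠ 0) (h₃ : t₃ ≠ 0) :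
    ∃ r s : ℕ, 0 < r ∧ 0 < s ∧ Nonempty (Matrix (Fin r) (Fin r)
      (CliffordAlgebra (QuadraticMap.weightedSumSquares K
        ![-a, -b, a * b, t₁, t₂, -(t₁ * t₂), t₃, -(t₃ * t₁), -(t₃ * t₂), t₃ * t₁ * t₂])) ≃ₐ[K]
      Matrix (Fin s) (Fin s) ℍ[K, a, b]) := by
  have h := ((((GenSys.base a b).step h2 t₁ h₁).step h2 t₂ h₂).step h2 (-1)
    (neg_ne_zero.mpr one_ne_zero)).step h2 (-t₃) (neg_ne_zero.mpr h₃)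
  obtain ⟨E⟩ := clifford_equiv h2 a b t₁ t₂ t₃ ha hb h₁ h₂ h₃ h rfl rfl rfl rfl rfl rfl rfl rfl
    rfl rfl (by simp [Module.finrank_matrix, QuaternionAlgebra.finrank_eq_four])
  refine ⟨1, 16, by norm_num, by norm_num, ⟨?_⟩⟩
  let Q1 := Matrix (Fin 2) (Fin 2) ℍ[K, a, b]
  let Q2 := Matrix (Fin 2) (Fin 2) Q1
  let Q3 := Matrix (Fin 2) (Fin 2) Q2
  let E0 := Matrix.compAlgEquiv (Fin 1) (Fin 2) Q3 K
  let E1 := Matrix.compAlgEquiv (Fin 1 × Fin 2) (Fin 2) Q2 K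
  let E2 := Matrix.compAlgEquiv ((Fin 1 × Fin 2) × Fin 2) (Fin 2) Q1 K
  let E3 := Matrix.compAlgEquiv (((Fin 1 × Fin 2) × Fin 2) × Fin 2) (Fin 2) ℍ[K, a, b] K
  let e : (((Fin 1 × Fin 2) × Fin 2) × Fin 2) × Fin 2 ≃ Fin 16 :=
    Fintype.equivFinOfCardEq (by simp)
  exact (E.mapMatrix (m := Fin 1)).trans (E0.trans (E1.trans (E2.trans (E3.trans
    (Matrix.reindexAlgEquiv K ℍ[K, a, b] e)))))

theorem statement6 {k : Type u} [Field k] (h2 : (2 : k) ≠ 0) (a b : k)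
    (ha : a ≠ 0) (hb : b ≠ 0)
    -- `Q = (a,b)_k` is a division ring
    (hdiv : ∀ x : ℍ[k, a, b], x ≠ 0 → IsUnit x) :
    -- `K = k(t₁,t₂,t₃)`
    let K := FractionRing (MvPolynomial (Fin 3) k)
    let t : Fin 3 → K := fun i => algebraMap (MvPolynomial (Fin 3) k) K (MvPolynomial.X i)
    let a' : K := algebraMap k K a
    let b' : K := algebraMap k K b
    -- the diagonal entries `⟨-a, -b, ab, t₁, t₂, -t₁t₂, t₃, -t₃t₁, -t₃t₂, t₃t₁t₂⟩`
    let w : Fin 10 → K :=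
      ![-a', -b', a' * b', t 0, t 1, -(t 0 * t 1),
        t 2, -(t 2 * t 0), -(t 2 * t 1), t 2 * t 0 * t 1]
    -- the ten-dimensional diagonal quadratic form `q'` over `K`
    let q' : QuadraticForm K (Fin 10 → K) := QuadraticMap.weightedSumSquares K w
    -- `q'` is anisotropic
    q'.Anisotropic ∧
    -- `q'` has trivial signed discriminant: `-det(q')` is a square in `K`
    IsSquare (-(∏ i, w i)) ∧
    -- the Clifford algebra `C(q')` is Brauer equivalent to the quaternion algebra `(a,b)_K`
    (∃ r s : ℕ, 0 < r ∧ 0 < s ∧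
      Nonempty (Matrix (Fin r) (Fin r) (CliffordAlgebra q') ≃ₐ[K]
        Matrix (Fin s) (Fin s) ℍ[K, a', b'])) := by
  intro K t a' b' w q'
  have hinj : Function.Injective (algebraMap k K) := (algebraMap k K).injective
  have h2' : (2 : K) ≠ 0 := by
    have := (map_ne_zero_iff _ hinj).mpr h2
    rwa [map_ofNat] at this
  have ht : ∀ i, t i ≠ 0 := fun i =>
    (map_ne_zero_iff _ (IsFractionRing.injective (MvPolynomial (Fin 3) k) K)).mpr
      (MvPolynomial.X_ne_zero i)
  refine ⟨aniso_main a b hdiv, ?_, ?_⟩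
  · refine ⟨a' * b' * (t 0 * t 1) * (t 2 * t 2) * (t 0 * t 1), ?_⟩
    simp only [Fin.prod_univ_succ, w]
    simp
    ring
  · exact clifford_main h2' a' b' (t 0) (t 1) (t 2) ((map_ne_zero_iff _ hinj).mpr ha)
      ((map_ne_zero_iff _ hinj).mpr hb) (ht 0) (ht 1) (ht 2)
end

section
/- Let k be a field with char(k) ≠ 2 and let δ ∈ kˣ be an element which is not a square. Then for any a ∈ kˣ there exist a field extension k ⊆ L in which δ is still not a square, and an anisotropic nondegenerate quadratic form q of dimension ten over L whose signed discriminant is δ (that is, -det(q)·δ is a square in L) and whose Witt invariant is the class of the quaternion algebra (a,δ)_L: the Clifford algebra C(q) is Brauer equivalent to (a,δ)_L, i.e., M_r(C(q)) ≅ M_s((a,δ)_L) as L-algebras for some r, s ≥ 1. -/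
/-!
STATEMENT 7: Let `k` be a field with `char k ≠ 2` and `δ ∈ kˣ` a non-square.  Then for
any `a ∈ kˣ` there is a field extension `k ⊆ L` in which `δ` is still not a square, and
an anisotropic nondegenerate ten-dimensional quadratic form `q` over `L` with signed
discriminant `δ` (`-det(q)·δ` is a square in `L`) whose Clifford algebra is Brauer
equivalent to the quaternion algebra `(a,δ)_L`.

Quadratic forms of dimension ten are formalized as quadratic forms on `Fin 10 → L`; the
Gram matrix of such a form is `(polar q eᵢ eⱼ)/2` and nondegeneracy is the nonvanishing
of its determinant.
-/

open scoped Quaternion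

universe u

/-- The Gram matrix of a quadratic form on `Fin n → K`: the matrix of the associated
symmetric bilinear form `(x, y) ↦ polar q x y / 2` in the standard basis. -/
noncomputable def gramMatrix {K : Type*} [Field K] {n : ℕ}
    (q : QuadraticForm K (Fin n → K)) : Matrix (Fin n) (Fin n) K :=
  Matrix.of fun i j => QuadraticMap.polar q (Pi.single i 1) (Pi.single j 1) / 2

section
open Polynomial

def Aniso {R ι : Type*} [CommRing R] [Fintype ι] (w : ι → R) : Prop :=
  ∀ v : ι → R, ∑ i, w i * v i ^ 2 = 0 → v = 0

theorem Aniso.poly_sum {R ι : Type*} [CommRing R] [IsDomain R] [Fintype ι] {w : ι → R}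
    (hw : Aniso w) (p : ι → R[X]) (hp : p ≠ 0) :
    ∑ i, C (w i) * p i ^ 2 ≠ 0 ∧ ∃ N, (∑ i, C (w i) * p i ^ 2).natDegree = 2 * N := by
  obtain ⟨j, hj⟩ := Function.ne_iff.1 hp
  have : Nonempty ι := ⟨j⟩
  obtain ⟨i0, hi0⟩ := Finite.exists_max (fun i => (p i).natDegree)
  set N := (p i0).natDegree with hN
  have hc : (∑ i, C (w i) * p i ^ 2).coeff (2 * N) = ∑ i, w i * ((p i).coeff N) ^ 2 := by
    rw [finsetSum_coeff]
    refine Finset.sum_congr rfl fun i _ => ?_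
    rw [coeff_C_mul, coeff_pow_of_natDegree_le (hi0 i)]
  have hne : (∑ i, C (w i) * p i ^ 2).coeff (2 * N) ≠ 0 := by
    rw [hc]
    intro h
    have h0 := hw _ h
    have h1 : p i0 = 0 := by
      have := congrFun h0 i0
      simpa [hN] using this
    have hN0 : N = 0 := by rw [hN, h1]; simp
    apply hj
    have h2 := congrFun h0 j
    have h3 := hi0 j
    rw [hN0] at h3
    simp only [hN0, Pi.zero_apply] at h2
    rw [eq_C_of_natDegree_le_zero h3, h2]; simp
  refine ⟨fun h => hne (by rw [h]; simp), N, ?_⟩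
  refine le_antisymm ?_ (le_natDegree_of_ne_zero hne)
  refine natDegree_sum_le_of_forall_le _ _ fun i _ => ?_
  refine (natDegree_C_mul_le _ _).trans ?_
  exact natDegree_pow_le_of_le 2 (hi0 i)

theorem Aniso.poly {R ι : Type*} [CommRing R] [IsDomain R] [Fintype ι] {w : ι → R}
    (hw : Aniso w) : Aniso (fun i => C (w i)) := by
  intro p h
  by_contra hp
  exact (hw.poly_sum p hp).1 h

theorem Aniso.sum {R ι κ : Type*} [CommRing R] [IsDomain R] [Fintype ι] [Fintype κ] {w : ι → R}
    {w' : κ → R} (hw : Aniso w) (hw' : Aniso w') :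
    Aniso (Sum.elim (fun i => C (w i)) (fun i => X * C (w' i))) := by
  intro p h
  rw [Fintype.sum_sum_type] at h
  simp only [Sum.elim_inl, Sum.elim_inr, mul_assoc] at h
  rw [← Finset.mul_sum] at h
  have h2 : (fun i => p (Sum.inr i)) = 0 := by
    by_contra hp
    obtain ⟨hB, M, hM⟩ := hw'.poly_sum _ hp
    have hd := natDegree_X_mul hB
    by_cases hp1 : (fun i => p (Sum.inl i)) = 0
    · have : ∀ i, p (Sum.inl i) = 0 := fun i => congrFun hp1 i
      simp only [this] at h
      simp only [ne_eq, OfNat.ofNat_ne_zero, not_false_eq_true, zero_pow, mul_zero,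
        Finset.sum_const_zero, zero_add, mul_eq_zero, X_ne_zero, false_or] at h
      exact hB h
    · obtain ⟨hA, N, hN⟩ := hw.poly_sum _ hp1
      rw [eq_neg_of_add_eq_zero_left h, natDegree_neg, hd, hM] at hN
      omega
  have h2' : ∀ i, p (Sum.inr i) = 0 := fun i => congrFun h2 i
  simp only [h2'] at h
  have h1 := hw.poly (fun i => p (Sum.inl i)) (by simpa using h)
  funext i
  rcases i with i | i
  · exact congrFun h1 i
  · exact h2' i

theorem Aniso.frac {R K ι : Type*} [CommRing R] [IsDomain R] [Field K] [Algebra R K]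
    [IsFractionRing R K] [Fintype ι] {w : ι → R}
    (hw : Aniso w) : Aniso (fun i => algebraMap R K (w i)) := by
  intro v h
  obtain ⟨b, hb⟩ := IsLocalization.exist_integer_multiples_of_finite (nonZeroDivisors R) v
  choose p hp using hb
  have hb0 : algebraMap R K b ≠ 0 := IsFractionRing.to_map_ne_zero_of_mem_nonZeroDivisors b.2
  have hp0 : p = 0 := by
    apply hw
    apply IsFractionRing.injective R K
    rw [map_sum, map_zero]
    have : ∀ i, algebraMap R K (w i * p i ^ 2) =
        algebraMap R K b ^ 2 * (algebraMap R K (w i) * v i ^ 2) := by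
      intro i
      rw [map_mul, map_pow, hp, Algebra.smul_def]; ring
    simp only [this]
    rw [← Finset.mul_sum, h, mul_zero]
  funext i
  have := hp i
  rw [hp0, Algebra.smul_def] at this
  simpa [hb0] using this.symm

theorem aniso_pair {k : Type*} [Field k] {δ : k} (hδ : ¬ IsSquare δ) {a : k} (ha : a ≠ 0) :
    Aniso ![a, -(a * δ)] := by
  intro v h
  simp only [Fin.sum_univ_two, Matrix.cons_val_zero, Matrix.cons_val_one] at h
  have h' : v 0 ^ 2 = δ * v 1 ^ 2 := by
    apply mul_left_cancel₀ ha
    linear_combination h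
  have h1 : v 1 = 0 := by
    by_contra h1
    apply hδ
    refine ⟨v 0 / v 1, ?_⟩
    field_simp
    rw [h']
  have h0 : v 0 = 0 := by simpa [h1] using h'
  funext i
  fin_cases i <;> simp [h0, h1]

/-- The ten weights. -/
def wts {L : Type*} [CommRing L] (a δ x y z : L) : Fin 10 → L :=
  ![a, -(a * δ), z, -(z * δ), -(z * x), z * δ * x, -(z * y), z * y * δ, z * y * x, -(z * y * δ * x)]

/-- The polynomial ring in three variables. -/
abbrev P3 (k : Type*) [Field k] := k[X][X][X]

set_option maxSynthPendingDepth 4 in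
theorem exists_field_aux {k L : Type u} [Field k] [Field L] [Algebra k L]
    [Algebra (P3 k) L] [IsFractionRing (P3 k) L]
    (δ : k) (hδ : ¬ IsSquare δ) (a : k) (ha : a ≠ 0)
    (e : ∀ c : k, algebraMap k L c = algebraMap (P3 k) L (C (C (C c)))) :
    (¬ IsSquare (algebraMap k L δ)) ∧ ∃ x y z : L, x ≠ 0 ∧ y ≠ 0 ∧ z ≠ 0 ∧
        Aniso (wts (algebraMap k L a) (algebraMap k L δ) x y z) := by
  have h1 : Aniso ![(1 : k), -(1 * δ)] := aniso_pair hδ one_ne_zero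
  have h2 := h1.sum h1
  have h3 := h2.sum h2
  have h4 := (((aniso_pair hδ ha).poly.poly).sum h3).frac (K := L)
  have inj : Function.Injective (algebraMap (P3 k) L) := IsFractionRing.injective (P3 k) L
  refine ⟨?_, algebraMap (P3 k) L (-(C (C X) : P3 k)),
    algebraMap (P3 k) L (-(C X : P3 k)), algebraMap (P3 k) L (X : P3 k),
    ?_, ?_, ?_, ?_⟩
  · rintro ⟨s, hs⟩
    have := (aniso_pair hδ one_ne_zero).poly.poly.poly.frac (K := L) ![s, 1] (by
      simp [Fin.sum_univ_two, ← e, hs, pow_two])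
    simpa using congrFun this 1
  · rw [Ne, map_eq_zero_iff _ inj]; simp
  · rw [Ne, map_eq_zero_iff _ inj]; simp
  · rw [Ne, map_eq_zero_iff _ inj]; simp
  · intro v hv
    have := h4 (Sum.elim ![v 0, v 1] (Sum.elim (Sum.elim ![v 2, v 3] ![v 4, v 5])
      (Sum.elim ![v 6, v 7] ![v 8, v 9]))) (by
      rw [← hv]
      simp only [e, wts, Fintype.sum_sum_type, Fin.sum_univ_succ, Fin.isValue]
      simp
      ring)
    have t := congrFun this
    have t0 := t (Sum.inl 0)
    have t1 := t (Sum.inl 1)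
    have t2 := t (Sum.inr (Sum.inl (Sum.inl 0)))
    have t3 := t (Sum.inr (Sum.inl (Sum.inl 1)))
    have t4 := t (Sum.inr (Sum.inl (Sum.inr 0)))
    have t5 := t (Sum.inr (Sum.inl (Sum.inr 1)))
    have t6 := t (Sum.inr (Sum.inr (Sum.inl 0)))
    have t7 := t (Sum.inr (Sum.inr (Sum.inl 1)))
    have t8 := t (Sum.inr (Sum.inr (Sum.inr 0)))
    have t9 := t (Sum.inr (Sum.inr (Sum.inr 1)))
    simp at t0 t1 t2 t3 t4 t5 t6 t7 t8 t9
    funext i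
    fin_cases i <;> simp [*]

set_option maxSynthPendingDepth 4 in
theorem exists_field {k : Type u} [Field k] (δ : k) (hδ : ¬ IsSquare δ) (a : k) (ha : a ≠ 0) :
    ∃ (L : Type u) (_ : Field L) (_ : Algebra k L), (¬ IsSquare (algebraMap k L δ)) ∧
      ∃ x y z : L, x ≠ 0 ∧ y ≠ 0 ∧ z ≠ 0 ∧
        Aniso (wts (algebraMap k L a) (algebraMap k L δ) x y z) := by
  obtain ⟨h1, h2⟩ := exists_field_aux (L := FractionRing (P3 k)) δ hδ a ha
    (fun c => IsScalarTower.algebraMap_apply k (P3 k) _ c)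
  exact ⟨_, inferInstance, inferInstance, h1, h2⟩

theorem polar_wss {K : Type*} [Field K] {n : ℕ} (w : Fin n → K) (u v : Fin n → K) :
    QuadraticMap.polar (QuadraticMap.weightedSumSquares K w) u v = ∑ i, 2 * w i * u i * v i := by
  simp only [QuadraticMap.polar, QuadraticMap.weightedSumSquares_apply, ← Finset.sum_sub_distrib]
  refine Finset.sum_congr rfl fun i _ => ?_
  simp; ring

theorem gram_wss {K : Type*} [Field K] (h2 : (2 : K) ≠ 0) {n : ℕ} (w : Fin n → K) :
    gramMatrix (QuadraticMap.weightedSumSquares K w) = Matrix.diagonal w := by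
  ext i j
  simp only [gramMatrix, Matrix.of_apply, polar_wss]
  rw [Finset.sum_eq_single i]
  · by_cases h : i = j
    · subst h; simp [h2]
    · simp [h]
  · intro b _ hb; simp [hb]
  · simp


end

section
open scoped TensorProduct

theorem split_comm {L T : Type*} [Field L] [Ring T] [Algebra L T] (h2 : (2 : L) ≠ 0)
    {b : L} (hb : b ≠ 0) {I Y Z : T} (hI : I * I = algebraMap L T b)
    (hY : I * Y = Y * I) (hZ : I * Z = -(Z * I)) (h : Y + Z = 0) : Y = 0 ∧ Z = 0 := by
  have h1 : (2 * b) • Y = 0 := by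
    have : I * (I * (Y + Z) + (Y + Z) * I) = (2 * b) • Y := by
      have : I * (Y + Z) + (Y + Z) * I = (2 : L) • (I * Y) := by
        rw [mul_add, add_mul, hY, hZ, two_smul]; abel
      rw [this, mul_smul_comm, ← mul_assoc, hI, mul_smul, Algebra.smul_def b]
    rw [← this, h]; simp
  have hY0 : Y = 0 := by
    rcases smul_eq_zero.1 h1 with h | h
    · exact absurd h (mul_ne_zero h2 hb)
    · exact h
  exact ⟨hY0, by simpa [hY0] using h⟩

theorem cancel_left {L T : Type*} [Field L] [Ring T] [Algebra L T]
    {b : L} (hb : b ≠ 0) {I Y : T} (hI : I * I = algebraMap L T b) (h : I * Y = 0) : Y = 0 := by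
  have : b • Y = 0 := by rw [Algebra.smul_def, ← hI, mul_assoc, h, mul_zero]
  exact (smul_eq_zero.1 this).resolve_left hb

theorem quat_indep {L T : Type*} [Field L] [Ring T] [Algebra L T] (h2 : (2 : L) ≠ 0)
    {b c : L} (hb : b ≠ 0) (hc : c ≠ 0) {I J α₀ α₁ α₂ α₃ : T} (hI : I * I = algebraMap L T b)
    (hJ : J * J = algebraMap L T c) (hIJ : J * I = -(I * J))
    (i0 : Commute I α₀) (i1 : Commute I α₁) (i2 : Commute I α₂) (i3 : Commute I α₃)
    (j0 : Commute J α₀) (j1 : Commute J α₁) (j2 : Commute J α₂) (j3 : Commute J α₃)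
    (h : α₀ + I * α₁ + (J * α₂ + I * J * α₃) = 0) : α₀ = 0 ∧ α₁ = 0 ∧ α₂ = 0 ∧ α₃ = 0 := by
  have hIJ' : I * J = -(J * I) := by rw [hIJ, neg_neg]
  obtain ⟨hY, hZ⟩ := split_comm h2 hb hI (Y := α₀ + I * α₁) (Z := J * α₂ + I * J * α₃)
    (by rw [mul_add, add_mul, i0.eq, mul_assoc I α₁, ← i1.eq])
    (by
      have e1 : I * (J * α₂) = -(J * α₂ * I) := by
        rw [mul_assoc J, ← i2.eq, ← mul_assoc, ← mul_assoc, hIJ', neg_mul]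
      have e2 : I * (I * J * α₃) = -(I * J * α₃ * I) := by
        rw [mul_assoc (I * J), ← i3.eq, mul_assoc I J (I * α₃), ← mul_assoc J I, hIJ]
        simp only [neg_mul, mul_neg, neg_neg, mul_assoc]
      rw [mul_add, add_mul, e1, e2]; abel) h
  obtain ⟨h0, h1⟩ := split_comm h2 hc hJ (Y := α₀) (Z := I * α₁) j0.eq
    (by rw [← mul_assoc, hIJ, mul_assoc I α₁, ← j1.eq, neg_mul, mul_assoc]) hY
  obtain ⟨h2', h3⟩ := split_comm h2 hc hJ (Y := J * α₂) (Z := I * J * α₃)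
    (by rw [mul_assoc J α₂, ← j2.eq])
    (by rw [mul_assoc (I * J), ← j3.eq, ← mul_assoc J, ← mul_assoc J I J, hIJ]
        simp only [neg_mul, mul_assoc]) hZ
  refine ⟨h0, cancel_left hb hI h1, cancel_left hc hJ h2', ?_⟩
  rw [mul_assoc] at h3
  exact cancel_left hc hJ (cancel_left hb hI h3)

theorem quat_tensor_decomp {L A : Type*} [Field L] [Ring A] [Algebra L A] (b c : L)
    (x : ℍ[L, b, c] ⊗[L] A) : ∃ a₀ a₁ a₂ a₃ : A,
      x = 1 ⊗ₜ a₀ + (⟨0, 1, 0, 0⟩ : ℍ[L, b, c]) ⊗ₜ a₁ + ((⟨0, 0, 1, 0⟩ : ℍ[L, b, c]) ⊗ₜ a₂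
        + (⟨0, 0, 0, 1⟩ : ℍ[L, b, c]) ⊗ₜ a₃) := by
  induction x with
  | zero => exact ⟨0, 0, 0, 0, by simp⟩
  | tmul h a =>
    refine ⟨h.re • a, h.imI • a, h.imJ • a, h.imK • a, ?_⟩
    simp only [← TensorProduct.smul_tmul, ← TensorProduct.add_tmul]
    congr 1
    ext <;> simp
  | add x y hx hy =>
    obtain ⟨a₀, a₁, a₂, a₃, rfl⟩ := hx
    obtain ⟨b₀, b₁, b₂, b₃, rfl⟩ := hy
    refine ⟨a₀ + b₀, a₁ + b₁, a₂ + b₂, a₃ + b₃, ?_⟩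
    simp only [TensorProduct.tmul_add]
    abel

theorem quat_tensor_inj {L A T : Type*} [Field L] [Ring A] [Algebra L A] [Ring T] [Algebra L T]
    (h2 : (2 : L) ≠ 0) {b c : L} (hb : b ≠ 0) (hc : c ≠ 0) (g : ℍ[L, b, c] ⊗[L] A →ₐ[L] T)
    (hg : Function.Injective (g.comp Algebra.TensorProduct.includeRight)) :
    Function.Injective g := by
  rw [injective_iff_map_eq_zero]
  intro x hx
  obtain ⟨a₀, a₁, a₂, a₃, rfl⟩ := quat_tensor_decomp b c x
  have com : ∀ (h : ℍ[L, b, c]) (a : A), Commute (g (h ⊗ₜ 1)) (g (1 ⊗ₜ a)) := fun h a =>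
    ((Commute.one_right _).tmul (Commute.one_left _)).map g
  have sp : ∀ (h : ℍ[L, b, c]) (a : A), g (h ⊗ₜ a) = g (h ⊗ₜ 1) * g (1 ⊗ₜ a) := fun h a => by
    rw [← map_mul, Algebra.TensorProduct.tmul_mul_tmul, mul_one, one_mul]
  have al : ∀ l : L, algebraMap L T l = g (algebraMap L ℍ[L, b, c] l ⊗ₜ 1) := fun l => by
    rw [← Algebra.TensorProduct.algebraMap_apply, AlgHom.commutes]
  have key := quat_indep h2 hb hc (I := g ((⟨0, 1, 0, 0⟩ : ℍ[L, b, c]) ⊗ₜ 1))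
    (J := g ((⟨0, 0, 1, 0⟩ : ℍ[L, b, c]) ⊗ₜ 1)) (α₀ := g (1 ⊗ₜ a₀)) (α₁ := g (1 ⊗ₜ a₁))
    (α₂ := g (1 ⊗ₜ a₂)) (α₃ := g (1 ⊗ₜ a₃))
    (by rw [← map_mul, Algebra.TensorProduct.tmul_mul_tmul, al]; congr 2 <;> [ext; skip] <;> simp [QuaternionAlgebra.algebraMap_eq])
    (by rw [← map_mul, Algebra.TensorProduct.tmul_mul_tmul, al]; congr 2 <;> [ext; skip] <;> simp [QuaternionAlgebra.algebraMap_eq])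
    (by
      rw [← map_mul, ← map_mul, ← map_neg, Algebra.TensorProduct.tmul_mul_tmul,
        Algebra.TensorProduct.tmul_mul_tmul, ← TensorProduct.neg_tmul]
      congr 2; ext <;> simp)
    (com _ _) (com _ _) (com _ _) (com _ _) (com _ _) (com _ _) (com _ _) (com _ _)
    (by
      rw [← hx]
      simp only [map_add]
      have e : (⟨0, 1, 0, 0⟩ : ℍ[L, b, c]) * ⟨0, 0, 1, 0⟩ = ⟨0, 0, 0, 1⟩ := by ext <;> simp
      rw [sp ⟨0, 1, 0, 0⟩ a₁, sp ⟨0, 0, 1, 0⟩ a₂, sp ⟨0, 0, 0, 1⟩ a₃, ← map_mul g (_ ⊗ₜ[L] (1 : A)) (_ ⊗ₜ[L] (1 : A)),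
        Algebra.TensorProduct.tmul_mul_tmul, e, mul_one])
  have z : ∀ a, g (1 ⊗ₜ a) = 0 → a = 0 := fun a ha => hg (by simpa using ha)
  obtain ⟨k0, k1, k2, k3⟩ := key
  rw [z _ k0, z _ k1, z _ k2, z _ k3]; simp

/-- Extension by two zeros. -/
def emb (L : Type*) [Field L] (n : ℕ) : (Fin n → L) →ₗ[L] (Fin (n + 2) → L) where
  toFun v := Fin.cons 0 (Fin.cons 0 v)
  map_add' u v := by
    funext i
    refine Fin.cases ?_ (fun i => Fin.cases ?_ (fun i => ?_) i) i <;> simp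
  map_smul' u v := by
    funext i
    refine Fin.cases ?_ (fun i => Fin.cases ?_ (fun i => ?_) i) i <;> simp

theorem emb_zero {L : Type*} [Field L] {n : ℕ} (v : Fin n → L) : emb L n v 0 = 0 := rfl
theorem emb_one {L : Type*} [Field L] {n : ℕ} (v : Fin n → L) : emb L n v 1 = 0 := rfl
theorem emb_succ {L : Type*} [Field L] {n : ℕ} (v : Fin n → L) (i : Fin n) :
    emb L n v i.succ.succ = v i := rfl

open QuadraticMap in
/-- the peeling map -/
theorem exists_peel {L : Type*} [Field L] {n : ℕ} (w : Fin (n + 2) → L)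
    (h0 : w 0 ≠ 0) (h1 : w 1 ≠ 0) :
    ∃ s : ℍ[L, w 0, w 1] ⊗[L] CliffordAlgebra (weightedSumSquares L
        (fun i : Fin n => -(w 0 * w 1) * w i.succ.succ)) →ₐ[L]
        CliffordAlgebra (weightedSumSquares L w), Function.Surjective s := by
  set Q := weightedSumSquares L w with hQ
  set Q' := weightedSumSquares L (fun i : Fin n => -(w 0 * w 1) * w i.succ.succ) with hQ'
  set e0 := CliffordAlgebra.ι Q (Pi.single 0 1) with he0
  set e1 := CliffordAlgebra.ι Q (Pi.single 1 1) with he1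
  have s0 : e0 * e0 = algebraMap _ _ (w 0) := by
    rw [he0, CliffordAlgebra.ι_sq_scalar, hQ, weightedSumSquares_apply,
      Finset.sum_eq_single 0] <;> simp +contextual
  have s1 : e1 * e1 = algebraMap _ _ (w 1) := by
    rw [he1, CliffordAlgebra.ι_sq_scalar, hQ, weightedSumSquares_apply,
      Finset.sum_eq_single 1] <;> simp +contextual
  have c01 : e1 * e0 = -(e0 * e1) := by
    rw [eq_neg_iff_add_eq_zero, he0, he1, CliffordAlgebra.ι_mul_ι_add_swap, hQ, polar_wss,
      Finset.sum_eq_zero, map_zero]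
    intro i _
    by_cases hi : i = 0
    · subst hi; simp
    · simp [hi]
  have c0 : ∀ v, CliffordAlgebra.ι Q (emb L n v) * e0 = -(e0 * CliffordAlgebra.ι Q (emb L n v)) := by
    intro v
    rw [eq_neg_iff_add_eq_zero, he0, CliffordAlgebra.ι_mul_ι_add_swap, hQ, polar_wss,
      Finset.sum_eq_zero, map_zero]
    intro i _
    by_cases hi : i = 0
    · subst hi; simp [emb_zero]
    · simp [hi]
  have c1 : ∀ v, CliffordAlgebra.ι Q (emb L n v) * e1 = -(e1 * CliffordAlgebra.ι Q (emb L n v)) := by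
    intro v
    rw [eq_neg_iff_add_eq_zero, he1, CliffordAlgebra.ι_mul_ι_add_swap, hQ, polar_wss,
      Finset.sum_eq_zero, map_zero]
    intro i _
    by_cases hi : i = 1
    · subst hi; simp [emb_one]
    · simp [hi]
  have c01v : ∀ v, CliffordAlgebra.ι Q (emb L n v) * (e0 * e1) =
      (e0 * e1) * CliffordAlgebra.ι Q (emb L n v) := by
    intro v
    rw [← mul_assoc, c0, neg_mul, mul_assoc, c1, mul_neg, neg_neg, mul_assoc]
  have s01 : (e0 * e1) * (e0 * e1) = algebraMap _ _ (-(w 0 * w 1)) := by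
    rw [mul_assoc, ← mul_assoc e1, c01, neg_mul, mul_neg, mul_assoc e0 e1 e1, s1, ← mul_assoc,
      s0, ← map_mul, ← map_neg]
  let B : QuaternionAlgebra.Basis (CliffordAlgebra Q) (w 0) 0 (w 1) :=
    { i := e0, j := e1, k := e0 * e1
      i_mul_i := by rw [s0, zero_smul, add_zero, Algebra.algebraMap_eq_smul_one]
      j_mul_j := by rw [s1, Algebra.algebraMap_eq_smul_one]
      i_mul_j := rfl
      j_mul_i := by rw [c01, zero_smul, zero_sub] }
  let f : (Fin n → L) →ₗ[L] CliffordAlgebra Q :=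
    (LinearMap.mulLeft L (e0 * e1)).comp ((CliffordAlgebra.ι Q).comp (emb L n))
  have hf : ∀ v, f v = e0 * e1 * CliffordAlgebra.ι Q (emb L n v) := fun v => rfl
  let ψ : CliffordAlgebra Q' →ₐ[L] CliffordAlgebra Q := CliffordAlgebra.lift Q' ⟨f, by
    intro v
    have : f v * f v = (e0 * e1) * (e0 * e1) *
        (CliffordAlgebra.ι Q (emb L n v) * CliffordAlgebra.ι Q (emb L n v)) := by
      rw [hf, mul_assoc (e0 * e1), ← mul_assoc (CliffordAlgebra.ι Q (emb L n v)), c01v]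
      simp only [mul_assoc]
    rw [this, s01, CliffordAlgebra.ι_sq_scalar, ← map_mul, hQ, hQ', weightedSumSquares_apply,
      weightedSumSquares_apply, Fin.sum_univ_succ, Fin.sum_univ_succ]
    congr 1
    have t1 : emb L n v (Fin.succ 0) = 0 := rfl
    simp only [emb_succ, emb_zero, t1, mul_zero, zero_add, smul_eq_mul, Finset.mul_sum]
    refine Finset.sum_congr rfl fun i _ => by ring⟩
  have hψ : ∀ v, ψ (CliffordAlgebra.ι Q' v) = f v := fun v => CliffordAlgebra.lift_ι_apply _ _ _
  have k0 : ∀ y, Commute e0 (ψ y) := by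
    intro y
    induction y using CliffordAlgebra.induction with
    | algebraMap r => rw [AlgHom.commutes]; exact (Algebra.commutes r e0).symm
    | ι v =>
      rw [hψ, hf, Commute, SemiconjBy]
      have a1 : e0 * e1 * e0 = -(e0 * (e0 * e1)) := by rw [mul_assoc, c01, mul_neg]
      rw [mul_assoc (e0 * e1), c0, mul_neg, ← mul_assoc (e0 * e1), a1, neg_mul, neg_neg]
      simp only [mul_assoc]
    | mul a b ha hb => rw [map_mul]; exact ha.mul_right hb
    | add a b ha hb => rw [map_add]; exact ha.add_right hb
  have k1 : ∀ y, Commute e1 (ψ y) := by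
    intro y
    induction y using CliffordAlgebra.induction with
    | algebraMap r => rw [AlgHom.commutes]; exact (Algebra.commutes r e1).symm
    | ι v =>
      rw [hψ, hf, Commute, SemiconjBy]
      have a1 : e1 * (e0 * e1) = -(e0 * e1 * e1) := by rw [← mul_assoc, c01, neg_mul]
      rw [mul_assoc (e0 * e1), c1, mul_neg, ← mul_assoc (e0 * e1), ← mul_assoc e1, a1, neg_mul]
    | mul a b ha hb => rw [map_mul]; exact ha.mul_right hb
    | add a b ha hb => rw [map_add]; exact ha.add_right hb
  let s := Algebra.TensorProduct.lift B.liftHom ψ (by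
    intro x y
    change Commute (algebraMap L _ x.re + x.imI • e0 + x.imJ • e1 + x.imK • (e0 * e1)) _
    have kk : Commute (algebraMap L (CliffordAlgebra Q) x.re) (ψ y) := Algebra.commutes _ _
    exact ((kk.add_left ((k0 y).smul_left _)).add_left
      ((k1 y).smul_left _)).add_left (((k0 y).mul_left (k1 y)).smul_left _))
  refine ⟨s, ?_⟩
  have r0 : e0 ∈ s.range := ⟨(⟨0, 1, 0, 0⟩ : ℍ[L, w 0, w 1]) ⊗ₜ 1, by
    simp [s, QuaternionAlgebra.Basis.liftHom, QuaternionAlgebra.Basis.lift, B]⟩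
  have r1 : e1 ∈ s.range := ⟨(⟨0, 0, 1, 0⟩ : ℍ[L, w 0, w 1]) ⊗ₜ 1, by
    simp [s, QuaternionAlgebra.Basis.liftHom, QuaternionAlgebra.Basis.lift, B]⟩
  have rv : ∀ v, CliffordAlgebra.ι Q (emb L n v) ∈ s.range := by
    intro v
    have m : e0 * e1 * CliffordAlgebra.ι Q (emb L n v) ∈ s.range :=
      ⟨1 ⊗ₜ CliffordAlgebra.ι Q' v, by
        change s _ = _
        rw [Algebra.TensorProduct.lift_tmul, map_one, one_mul, hψ, hf]⟩
    have m2 := s.range.smul_mem (s.range.mul_mem (s.range.mul_mem r0 r1) m) (-(w 0 * w 1))⁻¹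
    rw [← mul_assoc, s01, ← Algebra.smul_def, smul_smul, inv_mul_cancel₀, one_smul] at m2
    · exact m2
    · exact neg_ne_zero.2 (mul_ne_zero h0 h1)
  rw [← AlgHom.range_eq_top, eq_top_iff, ← CliffordAlgebra.adjoin_range_ι, Algebra.adjoin_le_iff]
  rintro _ ⟨v, rfl⟩
  have : v = v 0 • Pi.single 0 1 + v 1 • Pi.single 1 1 + emb L n (fun i => v i.succ.succ) := by
    funext i
    refine Fin.cases ?_ (fun i => Fin.cases ?_ (fun i => ?_) i) i
    · simp [emb_zero]
    · have t1 : emb L n (fun i => v i.succ.succ) (Fin.succ 0) = 0 := rfl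
      rw [Pi.add_apply, t1]; simp
    · have t1 : (i.succ.succ : Fin (n + 2)) ≠ 1 := by
        rw [← Fin.succ_zero_eq_one, Ne, Fin.succ_inj]; exact Fin.succ_ne_zero i
      simp [emb_succ, t1, Fin.succ_ne_zero]
  rw [this, map_add, map_add, map_smul, map_smul]
  exact s.range.add_mem (s.range.add_mem (s.range.smul_mem r0 _) (s.range.smul_mem r1 _)) (rv _)

open QuadraticMap in
theorem clifford_simple {L : Type u} [Field L] (h2 : (2 : L) ≠ 0) (n : ℕ) :
    ∀ w : Fin (2 * n) → L, (∀ i, w i ≠ 0) →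
      Module.Finite L (CliffordAlgebra (weightedSumSquares L w)) ∧
      Module.finrank L (CliffordAlgebra (weightedSumSquares L w)) = 4 ^ n ∧
      ∀ (T : Type u) [Ring T] [Algebra L T] [Nontrivial T]
        (f : CliffordAlgebra (weightedSumSquares L w) →ₐ[L] T), Function.Injective f := by
  let _ := invertibleOfNonzero h2
  induction n with
  | zero =>
    intro w _
    have hs : Function.Surjective (Algebra.ofId L (CliffordAlgebra (weightedSumSquares L w))) := by
      rw [← AlgHom.range_eq_top, eq_top_iff, ← CliffordAlgebra.adjoin_range_ι,
        Algebra.adjoin_le_iff]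
      rintro _ ⟨v, rfl⟩
      have : v = 0 := by
        funext i; exact absurd i.2 (by simp)
      rw [this, map_zero]
      exact Subalgebra.zero_mem _
    have e := AlgEquiv.ofBijective _ ⟨(Algebra.ofId L
      (CliffordAlgebra (weightedSumSquares L w))).toRingHom.injective, hs⟩
    refine ⟨Module.Finite.equiv e.toLinearEquiv, ?_, ?_⟩
    · rw [← e.toLinearEquiv.finrank_eq]; simp
    · intro T _ _ _ f
      have : Function.Injective (f.comp e.toAlgHom) := (f.comp e.toAlgHom).toRingHom.injective
      intro x y hxy
      obtain ⟨x, rfl⟩ := e.surjective x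
      obtain ⟨y, rfl⟩ := e.surjective y
      rw [this hxy]
  | succ n ih =>
    intro w hw
    change Fin (2 * n + 2) → L at w
    obtain ⟨s, hs⟩ := exists_peel w (hw 0) (hw 1)
    obtain ⟨i1, i2, i3⟩ := ih (fun i => -(w 0 * w 1) * w i.succ.succ)
      (fun i => mul_ne_zero (neg_ne_zero.2 (mul_ne_zero (hw _) (hw _))) (hw _))
    have inj : ∀ (T : Type u) [Ring T] [Algebra L T] [Nontrivial T]
        (f : CliffordAlgebra (weightedSumSquares L w) →ₐ[L] T),
        Function.Injective (f.comp s) := by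
      intro T _ _ _ f
      exact quat_tensor_inj h2 (hw 0) (hw 1) _ (i3 T _)
    have sinj : Function.Injective s := by
      have := inj _ (AlgHom.id L _)
      rwa [AlgHom.id_comp] at this
    let e := AlgEquiv.ofBijective s ⟨sinj, hs⟩
    refine ⟨Module.Finite.equiv e.toLinearEquiv, ?_, ?_⟩
    · have := e.toLinearEquiv.finrank_eq
      rw [Module.finrank_tensorProduct, i2, QuaternionAlgebra.finrank_eq_four] at this
      exact this.symm.trans (pow_succ' 4 n).symm
    · intro T _ _ _ f x y hxy
      obtain ⟨x, rfl⟩ := hs x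
      obtain ⟨y, rfl⟩ := hs y
      rw [inj T f hxy]
abbrev W (L : Type*) [Field L] (δ x : L) := ℍ[L, δ, x] × ℍ[L, δ, x] × ℍ[L, δ, x] × ℍ[L, δ, x]

def uu {L : Type*} [Field L] (δ x : L) : (Fin 10 → L) →ₗ[L] ℍ[L, δ, x] where
  toFun v := ⟨v 2, v 3, v 4, v 5⟩
  map_add' _ _ := by ext <;> simp
  map_smul' _ _ := by ext <;> simp

def vv {L : Type*} [Field L] (δ x : L) : (Fin 10 → L) →ₗ[L] ℍ[L, δ, x] where
  toFun v := ⟨v 6, v 7, v 8, v 9⟩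
  map_add' _ _ := by ext <;> simp
  map_smul' _ _ := by ext <;> simp

def hh {L : Type*} [Field L] (a δ : L) : (Fin 10 → L) →ₗ[L] ℍ[L, a, δ] where
  toFun v := ⟨0, v 0, 0, v 1⟩
  map_add' _ _ := by ext <;> simp
  map_smul' _ _ := by ext <;> simp

theorem hh_sq {L : Type*} [Field L] (a δ : L) (v : Fin 10 → L) :
    hh a δ v * hh a δ v = algebraMap L _ (a * v 0 ^ 2 - a * δ * v 1 ^ 2) := by
  ext <;> simp [hh, QuaternionAlgebra.algebraMap_eq] <;> ring

theorem qstar_mul {L : Type*} [Field L] (δ x : L) (u : ℍ[L, δ, x]) :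
    star u * u = algebraMap L _ (u.re ^ 2 - δ * u.imI ^ 2 - x * u.imJ ^ 2 + δ * x * u.imK ^ 2) := by
  ext <;> simp [QuaternionAlgebra.algebraMap_eq] <;> ring

theorem qmul_star {L : Type*} [Field L] (δ x : L) (u : ℍ[L, δ, x]) :
    u * star u = algebraMap L _ (u.re ^ 2 - δ * u.imI ^ 2 - x * u.imJ ^ 2 + δ * x * u.imK ^ 2) := by
  ext <;> simp [QuaternionAlgebra.algebraMap_eq] <;> ring

noncomputable def gam {L : Type*} [Field L] (δ x y z : L) :
    (Fin 10 → L) →ₗ[L] Module.End L (W L δ x) :=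
  LinearMap.mk₂ L (fun v p =>
    (uu δ x v * p.2.2.1 + p.2.1 * vv δ x v,
     uu δ x v * p.2.2.2 - (z * y) • (p.1 * star (vv δ x v)),
     z • (star (uu δ x v) * p.1) - p.2.2.2 * vv δ x v,
     z • (star (uu δ x v) * p.2.1) + (z * y) • (p.2.2.1 * star (vv δ x v))))
  (by
    intro v v' p
    simp only [map_add, star_add, mul_add, add_mul, smul_add, Prod.mk_add_mk]
    congr 1; · abel
    congr 1; · abel
    congr 1 <;> abel)
  (by
    intro c v p
    simp only [map_smul, QuaternionAlgebra.star_smul', smul_mul_assoc, mul_smul_comm, Prod.smul_mk,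
      smul_add, smul_sub, smul_comm c])
  (by
    intro v p p'
    simp only [Prod.fst_add, Prod.snd_add, mul_add, add_mul, smul_add, Prod.mk_add_mk]
    congr 1; · abel
    congr 1; · abel
    congr 1 <;> abel)
  (by
    intro c v p
    simp only [Prod.smul_fst, Prod.smul_snd, smul_mul_assoc, mul_smul_comm, Prod.smul_mk,
      smul_add, smul_sub, smul_comm c])

def omg {L : Type*} [Field L] (δ x : L) : Module.End L (W L δ x) where
  toFun p := (p.1, -p.2.1, -p.2.2.1, p.2.2.2)
  map_add' p p' := by simp [add_comm]
  map_smul' c p := by simp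

theorem gam_apply {L : Type*} [Field L] (δ x y z : L) (v : Fin 10 → L) (p : W L δ x) :
    gam δ x y z v p = (uu δ x v * p.2.2.1 + p.2.1 * vv δ x v,
     uu δ x v * p.2.2.2 - (z * y) • (p.1 * star (vv δ x v)),
     z • (star (uu δ x v) * p.1) - p.2.2.2 * vv δ x v,
     z • (star (uu δ x v) * p.2.1) + (z * y) • (p.2.2.1 * star (vv δ x v))) := rfl

theorem omg_apply {L : Type*} [Field L] (δ x : L) (p : W L δ x) :
    omg δ x p = (p.1, -p.2.1, -p.2.2.1, p.2.2.2) := rfl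

theorem omg_sq {L : Type*} [Field L] (δ x : L) : omg δ x * omg δ x = 1 := by
  apply LinearMap.ext
  intro p
  simp [omg_apply]

theorem omg_gam {L : Type*} [Field L] (δ x y z : L) (v : Fin 10 → L) :
    omg δ x * gam δ x y z v + gam δ x y z v * omg δ x = 0 := by
  apply LinearMap.ext
  intro p
  simp only [LinearMap.add_apply, Module.End.mul_apply, omg_apply, gam_apply, LinearMap.zero_apply,
    mul_neg, neg_mul, smul_neg, Prod.mk_add_mk]
  refine Prod.ext ?_ (Prod.ext ?_ (Prod.ext ?_ ?_)) <;> simp only [Prod.fst_zero, Prod.snd_zero] <;>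
    abel

theorem gam_sq {L : Type*} [Field L] (δ x y z : L) (v : Fin 10 → L) :
    gam δ x y z v * gam δ x y z v = algebraMap L _
      (z * (v 2 ^ 2 - δ * v 3 ^ 2 - x * v 4 ^ 2 + δ * x * v 5 ^ 2)
        - z * y * (v 6 ^ 2 - δ * v 7 ^ 2 - x * v 8 ^ 2 + δ * x * v 9 ^ 2)) := by
  have a1 := qstar_mul δ x (uu δ x v)
  have a2 := qmul_star δ x (uu δ x v)
  have b1 := qstar_mul δ x (vv δ x v)
  have b2 := qmul_star δ x (vv δ x v)
  change _ = algebraMap L _ (v 2 ^ 2 - δ * v 3 ^ 2 - x * v 4 ^ 2 + δ * x * v 5 ^ 2) at a1 a2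
  change _ = algebraMap L _ (v 6 ^ 2 - δ * v 7 ^ 2 - x * v 8 ^ 2 + δ * x * v 9 ^ 2) at b1 b2
  generalize v 2 ^ 2 - δ * v 3 ^ 2 - x * v 4 ^ 2 + δ * x * v 5 ^ 2 = N at *
  generalize v 6 ^ 2 - δ * v 7 ^ 2 - x * v 8 ^ 2 + δ * x * v 9 ^ 2 = M at *
  apply LinearMap.ext
  intro p
  rw [Module.algebraMap_end_apply]
  simp only [Module.End.mul_apply, gam_apply]
  generalize uu δ x v = u at *
  generalize vv δ x v = t at *
  have a1' : ∀ q, star u * (u * q) = N • q := fun q => by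
    rw [← mul_assoc, a1, Algebra.smul_def]
  have a2' : ∀ q, u * (star u * q) = N • q := fun q => by
    rw [← mul_assoc, a2, Algebra.smul_def]
  have b1' : ∀ q, q * star t * t = M • q := fun q => by
    rw [mul_assoc, b1, Algebra.smul_def, Algebra.commutes]
  have b2' : ∀ q, q * t * star t = M • q := fun q => by
    rw [mul_assoc, b2, Algebra.smul_def, Algebra.commutes]
  obtain ⟨p0, p1, p2, p3⟩ := p
  simp only [mul_add, add_mul, mul_sub, sub_mul, mul_smul_comm, smul_mul_assoc, smul_add, smul_sub,
    a1', a2', b1', b2', mul_assoc u, mul_assoc (star u), smul_smul, Prod.smul_mk, sub_smul]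
  refine Prod.ext ?_ (Prod.ext ?_ (Prod.ext ?_ ?_)) <;> 
    simp only [mul_comm z (z * y), Prod.fst_sub, Prod.snd_sub] <;> abel

open QuadraticMap in
theorem exists_hom {L : Type*} [Field L] (a δ x y z : L) :
    Nonempty (CliffordAlgebra (weightedSumSquares L (wts a δ x y z)) →ₐ[L]
      ℍ[L, a, δ] ⊗[L] Module.End L (W L δ x)) := by
  let f : (Fin 10 → L) →ₗ[L] ℍ[L, a, δ] ⊗[L] Module.End L (W L δ x) :=
    ((TensorProduct.mk L _ _).flip (omg δ x)).comp (hh a δ) +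
      ((TensorProduct.mk L ℍ[L, a, δ] _) 1).comp (gam δ x y z)
  have hf : ∀ v, f v = hh a δ v ⊗ₜ omg δ x + 1 ⊗ₜ gam δ x y z v := fun v => rfl
  refine ⟨CliffordAlgebra.lift _ ⟨f, ?_⟩⟩
  intro v
  have : f v * f v = (hh a δ v * hh a δ v) ⊗ₜ (omg δ x * omg δ x) +
      hh a δ v ⊗ₜ (omg δ x * gam δ x y z v + gam δ x y z v * omg δ x) +
      1 ⊗ₜ (gam δ x y z v * gam δ x y z v) := by
    rw [hf]
    simp only [mul_add, add_mul, Algebra.TensorProduct.tmul_mul_tmul, one_mul, mul_one,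
      TensorProduct.tmul_add]
    abel
  rw [this, omg_gam, omg_sq, gam_sq, hh_sq, TensorProduct.tmul_zero, add_zero,
    ← Algebra.TensorProduct.algebraMap_apply, ← Algebra.TensorProduct.algebraMap_apply', ← map_add,
    weightedSumSquares_apply]
  congr 1
  simp [Fin.sum_univ_succ, wts]
  ring

theorem finrank_W {L : Type*} [Field L] (δ x : L) : Module.finrank L (W L δ x) = 16 := by
  simp [W, Module.finrank_prod, QuaternionAlgebra.finrank_eq_four]

theorem target_equiv {L : Type*} [Field L] (a δ x : L) :
    Nonempty (ℍ[L, a, δ] ⊗[L] Module.End L (W L δ x) ≃ₐ[L] Matrix (Fin 16) (Fin 16) ℍ[L, a, δ]) :=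
  ⟨(Algebra.TensorProduct.congr AlgEquiv.refl
    (algEquivMatrix (Module.finBasisOfFinrankEq L (W L δ x) (finrank_W δ x)))).trans
    (matrixEquivTensor (Fin 16) L ℍ[L, a, δ]).symm⟩

open QuadraticMap in
theorem main_equiv {L : Type u} [Field L] (h2 : (2 : L) ≠ 0) (a δ x y z : L)
    (hw : ∀ i, wts a δ x y z i ≠ 0) :
    Nonempty (CliffordAlgebra (weightedSumSquares L (wts a δ x y z)) ≃ₐ[L]
      Matrix (Fin 16) (Fin 16) ℍ[L, a, δ]) := by
  obtain ⟨f⟩ := exists_hom a δ x y z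
  obtain ⟨e⟩ := target_equiv a δ x
  obtain ⟨h1, h3, h4⟩ := clifford_simple h2 5 (wts a δ x y z) hw
  have inj := h4 _ (e.toAlgHom.comp f)
  have hr : Module.finrank L (CliffordAlgebra (weightedSumSquares L (wts a δ x y z))) =
      Module.finrank L (Matrix (Fin 16) (Fin 16) ℍ[L, a, δ]) := by
    rw [Module.finrank_matrix, QuaternionAlgebra.finrank_eq_four]
    refine h3.trans ?_
    simp
  refine ⟨AlgEquiv.ofBijective (e.toAlgHom.comp f) ⟨inj, ?_⟩⟩
  have : FiniteDimensional L (CliffordAlgebra (weightedSumSquares L (wts a δ x y z))) := h1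
  exact (LinearMap.injective_iff_surjective_of_finrank_eq_finrank
    (f := (e.toAlgHom.comp f).toLinearMap) hr).1 inj

theorem one_equiv (L A : Type*) [Field L] [Ring A] [Algebra L A] :
    Nonempty (Matrix (Fin 1) (Fin 1) A ≃ₐ[L] A) :=
  ⟨{ toFun := fun M => M 0 0
     invFun := fun a => Matrix.of fun _ _ => a
     left_inv := fun M => by
      ext i j
      fin_cases i; fin_cases j; rfl
     right_inv := fun a => rfl
     map_mul' := fun M N => by simp [Matrix.mul_apply]
     map_add' := fun M N => rfl
     commutes' := fun r => by simp [Matrix.algebraMap_matrix_apply] }⟩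

end

theorem statement7 {k : Type u} [Field k] (h2 : (2 : k) ≠ 0)
    (δ : k) (hδ0 : δ ≠ 0) (hδ : ¬ IsSquare δ) (a : k) (ha : a ≠ 0) :
    ∃ (L : Type u) (_ : Field L) (_ : Algebra k L),
      -- `δ` is not a square in `L`
      (¬ IsSquare (algebraMap k L δ)) ∧
      ∃ q : QuadraticForm L (Fin 10 → L),
        -- `q` is anisotropic
        q.Anisotropic ∧
        -- `q` is nondegenerate
        (gramMatrix q).det ≠ 0 ∧
        -- `q` has signed discriminant `δ`: `-det(q)·δ` is a square in `L`
        IsSquare (-(gramMatrix q).det * algebraMap k L δ) ∧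
        -- the Witt invariant of `q` is the class of `(a,δ)_L`: the Clifford algebra
        -- `C(q)` is Brauer equivalent to the quaternion algebra `(a,δ)_L`
        ∃ r s : ℕ, 0 < r ∧ 0 < s ∧
          Nonempty (Matrix (Fin r) (Fin r) (CliffordAlgebra q) ≃ₐ[L]
            Matrix (Fin s) (Fin s) ℍ[L, algebraMap k L a, algebraMap k L δ]) := by
  obtain ⟨L, iF, iA, hsq, x, y, z, hx, hy, hz, han⟩ := exists_field δ hδ a ha
  have inj := (algebraMap k L).injective
  have h2L : (2 : L) ≠ 0 := by
    have := (map_ne_zero (algebraMap k L)).2 h2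
    rwa [map_ofNat] at this
  have ha' := (map_ne_zero (algebraMap k L)).2 ha
  have hδ' := (map_ne_zero (algebraMap k L)).2 hδ0
  refine ⟨L, iF, iA, hsq, QuadraticMap.weightedSumSquares L
    (wts (algebraMap k L a) (algebraMap k L δ) x y z), ?_, ?_, ?_, 1, 16, one_pos, by norm_num, ?_⟩
  · intro v hv
    apply han
    rw [← hv, QuadraticMap.weightedSumSquares_apply]
    exact Finset.sum_congr rfl fun i _ => by rw [smul_eq_mul, pow_two]
  · rw [gram_wss h2L, Matrix.det_diagonal]
    simp [Fin.prod_univ_succ, wts, ha', hδ', hx, hy, hz]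
  · rw [gram_wss h2L, Matrix.det_diagonal]
    refine ⟨algebraMap k L a * algebraMap k L δ ^ 3 * x ^ 2 * y ^ 2 * z ^ 4, ?_⟩
    simp [Fin.prod_univ_succ, wts]
    ring
  · obtain ⟨e⟩ := main_equiv h2L (algebraMap k L a) (algebraMap k L δ) x y z (by
      intro i
      fin_cases i <;> simp [wts, ha', hδ', hx, hy, hz])
    obtain ⟨e1⟩ := one_equiv L (CliffordAlgebra (QuadraticMap.weightedSumSquares L
      (wts (algebraMap k L a) (algebraMap k L δ) x y z)))
    exact ⟨e1.trans e⟩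
end

section
/- Let k be a field and let d, n be positive integers such that d divides n and every prime dividing n divides d (i.e., the squarefree part of n divides d). Then there exists a field extension k ⊆ K and a central division algebra ε over K of degree n (dim_K ε = n²) whose Brauer class has order exactly d in the Brauer group Br(K) — equivalently, the d-fold tensor power ε^{⊗d} over K is split and ε^{⊗m} is not split for 0 < m < d — such that for every finite-dimensional central division algebra D over k, the tensor product D ⊗_k ε (a central simple algebra over K) is a division ring. -/
open scoped TensorProduct

universe u

namespace S8

set_option linter.unusedSectionVars false

section A
variable (K : Type*) {E G : Type*} [Field K] [Field E] [Algebra K E] [Group G]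
  [MulSemiringAction G E]

/-- Matrices commuting with the twisted semilinear action. -/
def tw {Y : Type*} [Fintype Y] [DecidableEq Y] [MulAction G Y] [SMulCommClass G K E]
    (F : G → Y → E) : Subalgebra K (Matrix Y Y E) where
  carrier := {M | ∀ (h : G) (x y : Y), M (h • x) (h • y) * F h x = F h y * h • M x y}
  mul_mem' := by
    intro M N hM hN h x z
    rw [Matrix.mul_apply, Matrix.mul_apply, Finset.smul_sum, Finset.mul_sum, Finset.sum_mul,
      ← Equiv.sum_comp (MulAction.toPerm h : Equiv.Perm Y)]
    refine Finset.sum_congr rfl fun y _ => ?_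
    simp only [MulAction.toPerm_apply]
    have h1 := hM h x y
    have h2 := hN h y z
    rw [smul_mul']
    linear_combination N (h • y) (h • z) * h1 + h • M x y * h2
  add_mem' := by
    intro M N hM hN h x z
    have h1 := hM h x z
    have h2 := hN h x z
    simp only [Matrix.add_apply, smul_add]
    linear_combination h1 + h2
  algebraMap_mem' := by
    intro c h x y
    simp only [Matrix.algebraMap_matrix_apply, (MulAction.injective h).eq_iff]
    by_cases hxy : x = y
    · subst hxy
      simp [smul_algebraMap, mul_comm]
    · simp [hxy]

/-- Normalized two-cocycle with values fixed by the group. -/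
structure Coc (f : G → G → E) : Prop where
  ne : ∀ g h, f g h ≠ 0
  fix : ∀ s g h : G, s • f g h = f g h
  one_left : ∀ g, f 1 g = 1
  one_right : ∀ g, f g 1 = 1
  coc : ∀ h x g, f (h * x) g * f h x = f h (x * g) * f x g

variable [Fintype G] [DecidableEq G] [SMulCommClass G K E]

lemma mem_tw {Y : Type*} [Fintype Y] [DecidableEq Y] [MulAction G Y] (F : G → Y → E)
    (M : Matrix Y Y E) :
    M ∈ tw K F ↔ ∀ (h : G) (x y : Y), M (h • x) (h • y) * F h x = F h y * h • M x y := Iff.rfl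

/-- The matrix with given first row. -/
def rowMat (f : G → G → E) (α : G → E) : Matrix G G E :=
  fun x y => f x (x⁻¹ * y) * x • α (x⁻¹ * y)

variable {K}
variable {f : G → G → E}

lemma rowMat_mem (hf : Coc f) (α : G → E) : rowMat f α ∈ tw K f := by
  intro h x y
  have e : (h * x)⁻¹ * (h * y) = x⁻¹ * y := by group
  have := hf.coc h x (x⁻¹ * y)
  simp only [mul_inv_cancel_left] at this
  simp only [rowMat, smul_eq_mul, e, smul_mul', hf.fix, mul_smul]
  linear_combination (h • x • α (x⁻¹ * y)) * this

lemma eq_rowMat (hf : Coc f) {M : Matrix G G E} (hM : M ∈ tw K f) : M = rowMat f (M 1) := by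
  ext x y
  have := hM x 1 (x⁻¹ * y)
  simp only [smul_eq_mul, mul_one, mul_inv_cancel_left, hf.one_right] at this
  rw [this, rowMat]

/-- Elements of the crossed product are determined by the first row. -/
noncomputable def rowEquiv (hf : Coc f) : tw K f ≃ₗ[K] (G → E) where
  toFun M := M.1 1
  invFun α := ⟨rowMat f α, rowMat_mem hf α⟩
  map_add' _ _ := rfl
  map_smul' _ _ := rfl
  left_inv M := Subtype.ext (eq_rowMat hf M.2).symm
  right_inv α := by
    ext g
    simp [rowMat, hf.one_left]

lemma finrank_tw (hf : Coc f) [IsGaloisGroup G K E] :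
    Module.finrank K (tw K f) = Fintype.card G ^ 2 := by
  have := IsGaloisGroup.finiteDimensional G K E
  rw [(rowEquiv hf).finrank_eq, Module.finrank_pi_fintype, Finset.sum_const, Finset.card_univ,
    ← IsGaloisGroup.card_eq_finrank G K E, Nat.card_eq_fintype_card, smul_eq_mul, sq]

lemma finite_tw (hf : Coc f) [IsGaloisGroup G K E] : Module.Finite K (tw K f) := by
  have := IsGaloisGroup.finiteDimensional G K E
  exact Module.Finite.equiv (rowEquiv hf).symm

lemma isCentral_tw (hf : Coc f) [hG : IsGaloisGroup G K E] : Algebra.IsCentral K (tw K f) := by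
  constructor
  intro M hM
  rw [Subalgebra.mem_center_iff] at hM
  obtain ⟨M, hMt⟩ := M
  have hoff : ∀ x y, x ≠ y → M x y = 0 := by
    intro x y hxy
    by_contra h0
    apply hxy
    apply hG.faithful.eq_of_smul_eq_smul
    intro a
    have h1 := congrArg Subtype.val (hM ⟨_, rowMat_mem hf (Pi.single 1 a)⟩)
    have h2 := congrFun (congrFun h1 x) y
    have key : rowMat f (Pi.single 1 a) = Matrix.diagonal (fun x : G => x • a) := by
      ext x y
      by_cases h : x = y
      · subst h; simp [rowMat, hf.one_right]
      · have : x⁻¹ * y ≠ 1 := by rwa [Ne, inv_mul_eq_one]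
        simp [rowMat, h, this]
    simp only [MulMemClass.mk_mul_mk, key] at h2
    rw [Matrix.diagonal_mul, Matrix.mul_diagonal, mul_comm] at h2
    exact mul_left_cancel₀ h0 h2
  have hd : ∀ g, M g g = M 1 1 := by
    intro g
    have h1 := congrArg Subtype.val (hM ⟨_, rowMat_mem hf (Pi.single g 1)⟩)
    have h2 := congrFun (congrFun h1 1) g
    simp only [MulMemClass.mk_mul_mk, Matrix.mul_apply] at h2
    rw [Finset.sum_eq_single g, Finset.sum_eq_single 1] at h2
    · simpa [rowMat, hf.one_left] using h2
    · intro b _ hb; rw [hoff _ _ hb.symm, zero_mul]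
    · simp
    · intro b _ hb; rw [hoff _ _ hb, mul_zero]
    · simp
  have hfix : ∀ g : G, g • M 1 1 = M 1 1 := by
    intro g
    have := hMt g 1 1
    simp only [smul_eq_mul, mul_one, hf.one_right, one_mul] at this
    rw [← this, hd]
  obtain ⟨c, hc⟩ := hG.isInvariant.isInvariant _ hfix
  rw [Algebra.mem_bot]
  refine ⟨c, Subtype.ext ?_⟩
  ext x y
  change algebraMap K (Matrix G G E) c x y = M x y
  rw [Matrix.algebraMap_matrix_apply]
  split_ifs with h
  · subst h; rw [hd, hc]
  · exact (hoff _ _ h).symm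
end A
end S8


namespace S8

set_option linter.unusedSectionVars false

section B
variable {K : Type*} {E G : Type*} [Field K] [Field E] [Algebra K E] [Group G]
  [MulSemiringAction G E] [Fintype G] [DecidableEq G]

lemma dedekind [FaithfulSMul G E] (c : G → E) (h : ∀ a : E, ∑ x, c x * x • a = 0) (x : G) :
    c x = 0 := by
  have h1 := linearIndependent_monoidHom E E
  have inj : Function.Injective (fun x : G => ((MulSemiringAction.toRingHom G E x : E →+* E) : E →* E)) := by
    intro x y hxy
    apply FaithfulSMul.eq_of_smul_eq_smul (α := E)
    intro a
    exact DFunLike.congr_fun hxy a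
  have h2 := h1.comp _ inj
  rw [Fintype.linearIndependent_iff] at h2
  refine h2 c ?_ x
  ext a
  simpa using h a

variable [SMulCommClass G K E] [IsGaloisGroup G K E] {f : G → G → E}

lemma exists_dual_field : ∃ (w : Module.Basis G K E) (c : G → G → E),
    ∀ i j, ∑ x : G, c i x * x • w j = if i = j then 1 else 0 := by
  have := IsGaloisGroup.finiteDimensional G K E
  have : FaithfulSMul G E := IsGaloisGroup.faithful K
  have hc : Module.finrank K E = Fintype.card G := by
    rw [← IsGaloisGroup.card_eq_finrank G K E, Nat.card_eq_fintype_card]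
  let w : Module.Basis G K E := (Module.finBasisOfFinrankEq K E hc).reindex (Fintype.equivFin G).symm
  let W : Matrix G G E := fun x j => x • w j
  have hW : IsUnit W := by
    rw [← Matrix.linearIndependent_rows_iff_isUnit, Fintype.linearIndependent_iff]
    intro c h
    apply dedekind c
    intro a
    have : (∑ x, (c x) • ((MulSemiringAction.toAlgHom K E x).toLinearMap : E →ₗ[K] E)) = 0 := by
      apply w.ext
      intro j
      have := congrFun h j
      simpa [W, Matrix.row] using this
    simpa using LinearMap.congr_fun this a
  refine ⟨w, fun i x => (W⁻¹ : Matrix G G E) i x, fun i j => ?_⟩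
  have := congrFun (congrFun (Matrix.nonsing_inv_mul W ((Matrix.isUnit_iff_isUnit_det _).1 hW)) i) j
  rw [Matrix.mul_apply, Matrix.one_apply] at this
  exact this

lemma exists_dual (hf : Coc f) : ∃ (b : Module.Basis (Σ _ : G, G) K (tw K f))
    (c : (Σ _ : G, G) → G × G → E),
    ∀ i j, ∑ p : G × G, c i p * (b j).1 p.1 p.2 = if i = j then 1 else 0 := by
  obtain ⟨w, c, hc⟩ := exists_dual_field (K := K) (E := E) (G := G)
  refine ⟨(Pi.basis (fun _ : G => w)).map (rowEquiv hf).symm,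
    fun i p => if p.1⁻¹ * p.2 = i.1 then c i.2 p.1 * (f p.1 i.1)⁻¹ else 0, ?_⟩
  rintro ⟨g, i⟩ ⟨g', j⟩
  have e : ∀ x y, (((Pi.basis (fun _ : G => w)).map (rowEquiv (K := K) hf).symm) ⟨g', j⟩).1 x y
      = f x (x⁻¹ * y) * x • (Pi.single g' (w j) : G → E) (x⁻¹ * y) := by
    intro x y
    simp [rowEquiv, rowMat]
  simp only [e]
  rw [Fintype.sum_prod_type]
  have : ∀ x : G, ∑ y : G, (if x⁻¹ * y = g then c i x * (f x g)⁻¹ else 0) *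
      (f x (x⁻¹ * y) * x • (Pi.single g' (w j) : G → E) (x⁻¹ * y)) =
      if g = g' then c i x * x • w j else 0 := by
    intro x
    rw [Finset.sum_eq_single (x * g)]
    · have := hf.ne x g
      by_cases h : g = g'
      · subst h
        simp
        field_simp
      · simp [h]
    · intro y _ hy
      rw [if_neg, zero_mul]
      rintro rfl
      simp at hy
    · simp
  simp only [this]
  by_cases h : g = g'
  · subst h
    simp [hc]
  · simp [h]

/-- The product cochain. -/
def pf (f : G → G → E) (m : ℕ) (h : G) (x : Fin m → G) : E := ∏ j, f h (x j)

/-- Kronecker product as a multilinear map. -/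
def kronM (K : Type*) [Field K] [Algebra K E] [SMulCommClass G K E] (f : G → G → E) (m : ℕ) :
    MultilinearMap K (fun _ : Fin m => tw K f) (Matrix (Fin m → G) (Fin m → G) E) where
  toFun M := Matrix.of fun x y => ∏ j, (M j).1 (x j) (y j)
  map_update_add' := by
    intro _ M i a b
    ext x y
    simp only [Matrix.add_apply, Matrix.of_apply]
    rw [Finset.prod_eq_prod_sdiff_singleton_mul (Finset.mem_univ i),
      Finset.prod_eq_prod_sdiff_singleton_mul (Finset.mem_univ i),
      Finset.prod_eq_prod_sdiff_singleton_mul (Finset.mem_univ i)]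
    have : ∀ c : tw K f, ∏ j ∈ Finset.univ \ {i}, (Function.update M i c j).1 (x j) (y j) =
        ∏ j ∈ Finset.univ \ {i}, (M j).1 (x j) (y j) := by
      intro c
      refine Finset.prod_congr rfl fun j hj => ?_
      rw [Function.update_of_ne]
      simpa using hj
    simp only [this, Function.update_self]
    rw [← mul_add]
    rfl
  map_update_smul' := by
    intro _ M i r a
    ext x y
    simp only [Matrix.smul_apply, Matrix.of_apply]
    rw [Finset.prod_eq_prod_sdiff_singleton_mul (Finset.mem_univ i),
      Finset.prod_eq_prod_sdiff_singleton_mul (Finset.mem_univ i)]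
    have : ∀ c : tw K f, ∏ j ∈ Finset.univ \ {i}, (Function.update M i c j).1 (x j) (y j) =
        ∏ j ∈ Finset.univ \ {i}, (M j).1 (x j) (y j) := by
      intro c
      refine Finset.prod_congr rfl fun j hj => ?_
      rw [Function.update_of_ne]
      simpa using hj
    simp only [this, Function.update_self]
    rw [← mul_smul_comm]
    rfl

/-- Kronecker product. -/
noncomputable def kron (K : Type*) [Field K] [Algebra K E] [SMulCommClass G K E] (f : G → G → E)
    (m : ℕ) :
    (⨂[K] (_ : Fin m), tw K f) →ₐ[K] Matrix (Fin m → G) (Fin m → G) E :=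
  PiTensorProduct.liftAlgHom (kronM K f m)
    (by
      ext x y
      change ∏ j, (1 : Matrix G G E) (x j) (y j) = (1 : Matrix (Fin m → G) (Fin m → G) E) x y
      simp only [Matrix.one_apply]
      rw [Fintype.prod_ite_zero]
      simp [funext_iff])
    (by
      intro M N
      ext x z
      change ∏ j, ((M j).1 * (N j).1) (x j) (z j) = ∑ y : Fin m → G,
        (∏ j, (M j).1 (x j) (y j)) * (∏ j, (N j).1 (y j) (z j))
      simp only [Matrix.mul_apply, ← Finset.prod_mul_distrib]
      rw [Finset.prod_univ_sum]
      simp)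

lemma kron_tprod (m : ℕ) (M : Fin m → tw K f) (x y : Fin m → G) :
    kron K f m (PiTensorProduct.tprod K M) x y = ∏ j, (M j).1 (x j) (y j) := by
  have : kron K f m (PiTensorProduct.tprod K M) = kronM K f m M := by
    exact PiTensorProduct.lift.tprod (φ := kronM K f m) M
  rw [this]; rfl

lemma kron_mem (m : ℕ) (z : ⨂[K] (_ : Fin m), tw K f) : kron K f m z ∈ tw K (pf f m) := by
  induction z using PiTensorProduct.induction_on with
  | smul_tprod r M =>
    rw [map_smul]
    refine Subalgebra.smul_mem _ ?_ r
    intro h x y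
    simp only [kron_tprod, pf, Finset.smul_prod', ← Finset.prod_mul_distrib]
    exact Finset.prod_congr rfl fun j _ => (M j).2 h (x j) (y j)
  | add a b ha hb =>
    rw [map_add]
    exact Subalgebra.add_mem _ ha hb

lemma exists_dual_kron (hf : Coc f) (m : ℕ) :
    ∃ (b : Module.Basis (Fin m → Σ _ : G, G) K (⨂[K] (_ : Fin m), tw K f))
    (c : (Fin m → Σ _ : G, G) → (Fin m → G × G) → E),
    ∀ i j, ∑ p : Fin m → G × G, c i p * kron K f m (b j) (fun l => (p l).1) (fun l => (p l).2) =
      if i = j then 1 else 0 := by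
  obtain ⟨b, c, hc⟩ := exists_dual (K := K) hf
  refine ⟨Basis.piTensorProduct (fun _ => b), fun i p => ∏ l, c (i l) (p l), ?_⟩
  intro i j
  simp only [Basis.piTensorProduct_apply, kron_tprod, ← Finset.prod_mul_distrib]
  have := Finset.prod_univ_sum (κ := fun _ : Fin m => G × G) (fun _ : Fin m => Finset.univ)
    (fun l p => c (i l) p * (b (j l)).1 p.1 p.2)
  rw [Fintype.piFinset_univ] at this
  rw [← this]
  simp only [hc]
  rw [Fintype.prod_ite_zero]
  simp [funext_iff]

lemma kron_basis (hf : Coc f) (m : ℕ) :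
    ∃ (b : Module.Basis (Fin m → Σ _ : G, G) K (⨂[K] (_ : Fin m), tw K f)),
      LinearIndependent E (fun i => kron K f m (b i)) := by
  obtain ⟨b, c, hc⟩ := exists_dual_kron (K := K) hf m
  refine ⟨b, ?_⟩
  rw [Fintype.linearIndependent_iff]
  intro r hr i
  have : ∑ p : Fin m → G × G, c i p *
    (∑ j, r j • kron K f m (b j)) (fun l => (p l).1) (fun l => (p l).2) = 0 := by
    rw [hr]; simp
  simp only [Matrix.sum_apply, Finset.mul_sum, Matrix.smul_apply, smul_eq_mul] at this
  rw [Finset.sum_comm] at this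
  have h2 : ∀ j, ∑ p : Fin m → G × G, c i p * (r j * kron K f m (b j) (fun l => (p l).1) (fun l => (p l).2))
      = r j * if i = j then 1 else 0 := by
    intro j
    rw [← hc i j, Finset.mul_sum]
    exact Finset.sum_congr rfl fun p _ => by ring
  simpa [h2] using this

lemma kron_injective (hf : Coc f) (m : ℕ) : Function.Injective (kron K f m) := by
  obtain ⟨b, hb⟩ := kron_basis (K := K) hf m
  rw [injective_iff_map_eq_zero]
  intro z hz
  rw [← b.sum_repr z, map_sum] at hz
  simp only [map_smul] at hz
  rw [Fintype.linearIndependent_iff] at hb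
  have h0 := hb (fun i => algebraMap K E (b.repr z i)) (by simpa only [algebraMap_smul] using hz)
  apply b.repr.injective
  ext i
  simpa using h0 i

end B
end S8


namespace S8

set_option linter.unusedSectionVars false

section C
variable {K : Type*} {E G : Type*} [Field K] [Field E] [Algebra K E] [Group G]
  [MulSemiringAction G E] [Fintype G] [DecidableEq G]
  [SMulCommClass G K E] [IsGaloisGroup G K E] {f : G → G → E}

lemma pf_ne (hf : Coc f) (m : ℕ) (h : G) (x : Fin m → G) : pf f m h x ≠ 0 :=
  Finset.prod_ne_zero_iff.2 fun _ _ => hf.ne _ _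

lemma pf_fix (hf : Coc f) (m : ℕ) (s h : G) (x : Fin m → G) : s • pf f m h x = pf f m h x := by
  simp [pf, Finset.smul_prod', hf.fix]

lemma pf_coc (hf : Coc f) (m : ℕ) (g h : G) (x : Fin m → G) :
    pf f m (g * h) x * f g h ^ m = pf f m g (h • x) * pf f m h x := by
  have : f g h ^ m = ∏ _j : Fin m, f g h := by simp
  rw [this, pf, pf, pf, ← Finset.prod_mul_distrib, ← Finset.prod_mul_distrib]
  exact Finset.prod_congr rfl fun j _ => hf.coc g h (x j)

/-- The trivializing space. -/
def spl (K : Type*) [Field K] [Algebra K E] [SMulCommClass G K E] (f : G → G → E) (β : G → E)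
    (m : ℕ) : Submodule K ((Fin m → G) → E) where
  carrier := {φ | ∀ (h : G) x, φ (h • x) * pf f m h x = β h * h • φ x}
  add_mem' := by
    intro a b ha hb h x
    have h1 := ha h x
    have h2 := hb h x
    simp only [Pi.add_apply, smul_add]
    linear_combination h1 + h2
  zero_mem' := by intro h x; simp
  smul_mem' := by
    intro c a ha h x
    have h1 := ha h x
    simp only [Pi.smul_apply]
    rw [smul_comm h c, smul_mul_assoc, h1, mul_smul_comm c]

/-- coordinates -/
def coo (e : ℕ) : (Fin (e + 1) → G) ≃ G × (Fin e → G) where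
  toFun x := (x 0, fun i => (x 0)⁻¹ * x i.succ)
  invFun p := p.1 • (Fin.cons 1 p.2 : Fin (e + 1) → G)
  left_inv x := by
    ext i
    refine Fin.cases ?_ (fun j => ?_) i <;> simp
  right_inv p := by
    ext <;> simp

/-- extension of a function -/
noncomputable def ext (f : G → G → E) (β : G → E) (e : ℕ) (ψ : (Fin e → G) → E)
    (x : Fin (e + 1) → G) : E :=
  β (x 0) * (x 0) • ψ (coo e x).2 / pf f (e + 1) (x 0) ((x 0)⁻¹ • x)

variable {β : G → E} 

lemma ext_mem (hf : Coc f) {e : ℕ} (hβfix : ∀ s g : G, s • β g = β g)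
    (hβ : ∀ g h, f g h ^ (e + 1) * β (g * h) = β g * β h) (ψ : (Fin e → G) → E) :
    ext f β e ψ ∈ spl K f β (e + 1) := by
  intro h x
  have e1 : (coo e (h • x)).2 = (coo e x).2 := by
    ext i; simp [coo, mul_assoc]
  have e2 : ((h • x) 0)⁻¹ • (h • x) = (x 0)⁻¹ • x := by
    ext i; simp [mul_assoc]
  have e3 : (h • x) 0 = h * x 0 := rfl
  rw [ext, ext, e1, e2, e3, smul_div₀', smul_mul', hβfix, pf_fix hf, mul_smul]
  have h1 := hβ h (x 0)
  have h2 := pf_coc hf (e + 1) h (x 0) ((x 0)⁻¹ • x)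
  rw [smul_inv_smul] at h2
  have n1 := pf_ne hf (e + 1) (h * x 0) ((x 0)⁻¹ • x)
  have n2 := pf_ne hf (e + 1) (x 0) ((x 0)⁻¹ • x)
  have n3 := hf.ne h (x 0)
  field_simp
  have n4 := pow_ne_zero (e + 1) n3
  apply mul_left_cancel₀ n4
  linear_combination (h • x 0 • ψ (coo e x).2) * pf f (e+1) h x * pf f (e+1) (x 0) ((x 0)⁻¹ • x) * h1
   - (h • x 0 • ψ (coo e x).2) * β h * β (x 0) * h2

lemma beta_one (hf : Coc f) {e : ℕ} (hβ0 : ∀ g, β g ≠ 0)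
    (hβ : ∀ g h, f g h ^ (e + 1) * β (g * h) = β g * β h) : β 1 = 1 := by
  have := hβ 1 1
  rw [hf.one_left, one_pow, one_mul, one_mul] at this
  exact (mul_left_cancel₀ (hβ0 1) (by rw [← this, mul_one])).symm

lemma pf_one (hf : Coc f) (m : ℕ) (x : Fin m → G) : pf f m 1 x = 1 := by
  simp [pf, hf.one_left]

/-- The splitting space in coordinates. -/
noncomputable def splEquiv (hf : Coc f) {e : ℕ} (hβ0 : ∀ g, β g ≠ 0)
    (hβfix : ∀ s g : G, s • β g = β g)
    (hβ : ∀ g h, f g h ^ (e + 1) * β (g * h) = β g * β h) :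
    spl K f β (e + 1) ≃ₗ[K] ((Fin e → G) → E) where
  toFun φ y := φ.1 (Fin.cons 1 y)
  invFun ψ := ⟨ext f β e ψ, ext_mem hf hβfix hβ ψ⟩
  map_add' _ _ := rfl
  map_smul' _ _ := rfl
  left_inv φ := by
    apply Subtype.ext
    funext x
    have h1 := φ.2 (x 0) ((x 0)⁻¹ • x)
    rw [smul_inv_smul] at h1
    have h2 : (Fin.cons 1 (coo e x).2 : Fin (e + 1) → G) = (x 0)⁻¹ • x := by
      ext i
      refine Fin.cases ?_ (fun j => ?_) i <;> simp [coo]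
    simp only [ext, h2]
    rw [div_eq_iff (pf_ne hf _ _ _), h1]
  right_inv ψ := by
    funext y
    simp [ext, coo, beta_one hf hβ0 hβ, pf_one hf]

lemma finrank_spl (hf : Coc f) {e : ℕ} (hβ0 : ∀ g, β g ≠ 0)
    (hβfix : ∀ s g : G, s • β g = β g)
    (hβ : ∀ g h, f g h ^ (e + 1) * β (g * h) = β g * β h) :
    Module.finrank K (spl K f β (e + 1)) = Fintype.card G ^ (e + 1) := by
  have := IsGaloisGroup.finiteDimensional G K E
  rw [(splEquiv hf hβ0 hβfix hβ).finrank_eq, Module.finrank_pi_fintype, Finset.sum_const,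
    Finset.card_univ,
    ← IsGaloisGroup.card_eq_finrank G K E, Nat.card_eq_fintype_card, smul_eq_mul]
  simp [pow_succ]

lemma mulVec_mem (hf : Coc f) {m : ℕ} {M : Matrix (Fin m → G) (Fin m → G) E}
    (hM : M ∈ tw K (pf f m))
    {φ : (Fin m → G) → E} (hφ : φ ∈ spl K f β m) : M.mulVec φ ∈ spl K f β m := by
  intro h x
  simp only [Matrix.mulVec, dotProduct]
  rw [← Equiv.sum_comp (MulAction.toPerm h : Equiv.Perm (Fin m → G)), Finset.smul_sum,
    Finset.mul_sum, Finset.sum_mul]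
  refine Finset.sum_congr rfl fun y _ => ?_
  simp only [MulAction.toPerm_apply, smul_mul']
  have h1 := hM h x y
  have h2 := hφ h y
  linear_combination φ (h • y) * h1 + (h • M x y) * h2

/-- The action on the splitting space. -/
noncomputable def act (hf : Coc f) (β : G → E) (m : ℕ) :
    (⨂[K] (_ : Fin m), tw K f) →ₐ[K] Module.End K (spl K f β m) :=
  AlgHom.ofLinearMap
    { toFun := fun z =>
        { toFun := fun φ => ⟨(kron K f m z).mulVec φ.1, mulVec_mem hf (kron_mem m z) φ.2⟩
          map_add' := fun a b => Subtype.ext (Matrix.mulVec_add _ _ _)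
          map_smul' := fun c a => Subtype.ext (Matrix.mulVec_smul _ _ _) }
      map_add' := fun a b => by
        ext φ x
        simp [Matrix.add_mulVec]
      map_smul' := fun a b => by
        ext φ x
        simp [Matrix.smul_mulVec] }
    (by ext φ x; simp)
    (by intro a b; ext φ x; simp [Matrix.mulVec_mulVec])

lemma act_injective (hf : Coc f) {e : ℕ} (hβ0 : ∀ g, β g ≠ 0)
    (hβfix : ∀ s g : G, s • β g = β g)
    (hβ : ∀ g h, f g h ^ (e + 1) * β (g * h) = β g * β h) :
    Function.Injective (act (K := K) hf β (e + 1)) := by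
  have : FaithfulSMul G E := IsGaloisGroup.faithful K
  rw [injective_iff_map_eq_zero]
  intro z hz
  apply kron_injective hf
  rw [map_zero]
  have hk : ∀ φ ∈ spl K f β (e + 1), (kron K f (e + 1) z).mulVec φ = 0 := by
    intro φ hφ
    exact congrArg Subtype.val (LinearMap.congr_fun hz ⟨φ, hφ⟩)
  ext x y
  obtain ⟨⟨g, y⟩, rfl⟩ := (coo e).symm.surjective y
  set M := kron K f (e + 1) z
  have key := dedekind (fun g : G => M x ((coo e).symm (g, y)) *
    (β g / pf f (e + 1) g (Fin.cons 1 y))) ?_ g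
  · exact (mul_eq_zero.1 key).resolve_right (div_ne_zero (hβ0 _) (pf_ne hf _ _ _))
  · intro a
    have h1 := congrFun (hk _ (ext_mem (K := K) hf hβfix hβ (Pi.single y a))) x
    simp only [Matrix.mulVec, dotProduct] at h1
    rw [← (coo e).symm.sum_comp, Fintype.sum_prod_type] at h1
    rw [← Pi.zero_apply (M := fun _ => E) x, ← h1]
    refine Finset.sum_congr rfl fun g _ => ?_
    rw [Finset.sum_eq_single y]
    · have e1 : (coo e).symm (g, y) = g • (Fin.cons 1 y : Fin (e + 1) → G) := rfl
      have e2 : (g • (Fin.cons 1 y : Fin (e + 1) → G)) 0 = g := by simp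
      have e3 : (coo e (g • (Fin.cons 1 y : Fin (e + 1) → G))).2 = y := by
        rw [← e1, Equiv.apply_symm_apply]
      rw [ext, e1, e2, e3, inv_smul_smul, Pi.single_eq_same]
      ring
    · intro y' _ hy'
      rw [ext, Equiv.apply_symm_apply]
      simp [hy']
    · simp

lemma lin_surj {K A B : Type*} [Field K] [AddCommMonoid A] [AddCommMonoid B] [Module K A]
    [Module K B] [Module.Finite K A] [Module.Finite K B] (g : A →ₗ[K] B)
    (hg : Function.Injective g)
    (h : Module.finrank K A = Module.finrank K B) : Function.Surjective g := by
  letI := Module.addCommMonoidToAddCommGroup K (M := A)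
  letI := Module.addCommMonoidToAddCommGroup K (M := B)
  exact (LinearMap.injective_iff_surjective_of_finrank_eq_finrank (f := g) h).1 hg

lemma finrank_tensor (hf : Coc f) (m : ℕ) :
    Module.finrank K (⨂[K] (_ : Fin m), tw K f) = (Fintype.card G ^ m) ^ 2 := by
  obtain ⟨b, -⟩ := kron_basis (K := K) hf m
  rw [Module.finrank_eq_card_basis b]
  simp [← mul_pow, sq]

lemma tensor_split (hf : Coc f) {m : ℕ} (hm : 0 < m) (hβ0 : ∀ g, β g ≠ 0)
    (hβfix : ∀ s g : G, s • β g = β g)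
    (hβ : ∀ g h, f g h ^ m * β (g * h) = β g * β h) :
    ∃ r : ℕ, 0 < r ∧
        Nonempty ((⨂[K] (_ : Fin m), tw K f) ≃ₐ[K] Matrix (Fin r) (Fin r) K) := by
  obtain ⟨e, rfl⟩ : ∃ e, m = e + 1 := ⟨m - 1, by omega⟩
  have h1 := finrank_spl (K := K) hf hβ0 hβfix hβ
  have : Module.Finite K (spl K f β (e + 1)) := by
    apply Module.finite_of_finrank_pos
    rw [h1]
    exact pow_pos Fintype.card_pos _
  have hft : Module.Finite K (⨂[K] (_ : Fin (e + 1)), tw K f) := by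
    obtain ⟨b, -⟩ := kron_basis (K := K) hf (e + 1)
    exact Module.Finite.of_basis b
  have inj := act_injective (K := K) hf hβ0 hβfix hβ
  have surj : Function.Surjective (act (K := K) hf β (e + 1)) := by
    have hr : Module.finrank K (⨂[K] (_ : Fin (e + 1)), tw K f) =
        Module.finrank K (Module.End K (spl K f β (e + 1))) := by
      rw [finrank_tensor hf, Module.finrank_linearMap, h1, sq]
    exact lin_surj (act (K := K) hf β (e + 1)).toLinearMap inj hr
  exact ⟨_, pow_pos Fintype.card_pos (e + 1),
    ⟨(AlgEquiv.ofBijective _ ⟨inj, surj⟩).trans (algEquivMatrix (Module.finBasisOfFinrankEq K _ h1))⟩⟩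

end C
end S8


namespace S8

set_option linter.unusedSectionVars false

section D
variable {K : Type*} {E G : Type*} [Field K] [Field E] [Algebra K E] [Group G]
  [MulSemiringAction G E] [Fintype G] [DecidableEq G]
  [SMulCommClass G K E] [IsGaloisGroup G K E] {f : G → G → E}

lemma exists_vec {Y : Type*} [Fintype Y] [DecidableEq Y] [Nonempty Y] [MulAction G Y]
    {F : G → Y → E} (hF : ∀ h y, F h y ≠ 0) {A : Type*} [Semiring A] [Algebra K A]
    (κ : A →ₐ[K] Matrix Y Y E) (hκ : ∀ z, κ z ∈ tw K F) {r : ℕ}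
    (ρ : A ≃ₐ[K] Matrix (Fin r) (Fin r) K) (hr : r = Fintype.card Y) :
    ∃ (p : Y → E) (β : G → E), p ≠ 0 ∧ ∀ h x, h • p x = β h * F h x * p (h • x) := by
  have hr0 : 0 < r := hr ▸ Fintype.card_pos
  let i0 : Fin r := ⟨0, hr0⟩
  let N : Fin r → Fin r → Matrix Y Y E := fun i j => κ (ρ.symm (Matrix.single i j 1))
  have hN : ∀ i j l, N i j * N j l = N i l := by
    intro i j l
    simp only [N, ← map_mul, Matrix.single_mul_single_same, mul_one]
  have hN' : ∀ i j j' l, j ≠ j' → N i j * N j' l = 0 := by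
    intro i j j' l h
    simp only [N, ← map_mul]
    rw [Matrix.single_mul_single_of_ne _ _ _ _ h, map_zero, map_zero]
  have hN1 : ∑ i, N i i = 1 := by
    simp only [N, ← map_sum]
    rw [Matrix.sum_single_one, map_one, map_one]
  have hN0 : N i0 i0 ≠ 0 := by
    intro h0
    have : (1 : Matrix Y Y E) = 0 := by
      rw [← hN1]
      refine Finset.sum_eq_zero fun i _ => ?_
      rw [← hN i i0 i, ← hN i0 i0 i, h0]
      simp
    exact one_ne_zero this
  obtain ⟨v, hv⟩ : ∃ v, (N i0 i0).mulVec v ≠ 0 := by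
    by_contra! hv
    exact hN0 (Matrix.ext_of_mulVec_single fun i => by rw [hv, Matrix.zero_mulVec])
  let p : Fin r → Y → E := fun i => (N i i0).mulVec v
  have hp : ∀ i j, (N i j).mulVec (p j) = p i := by
    intro i j; simp only [p, Matrix.mulVec_mulVec, hN]
  have hp' : ∀ i j l, j ≠ l → (N i j).mulVec (p l) = 0 := by
    intro i j l h; simp only [p, Matrix.mulVec_mulVec, hN' _ _ _ _ h, Matrix.zero_mulVec]
  have key : ∀ (c : Fin r → E) j, (N i0 j).mulVec (∑ i, c i • p i) = c j • p i0 := by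
    intro c j
    rw [Matrix.mulVec_sum, Finset.sum_eq_single j]
    · rw [Matrix.mulVec_smul, hp]
    · intro b _ hb
      rw [Matrix.mulVec_smul, hp' _ _ _ hb.symm, smul_zero]
    · simp
  have hli : LinearIndependent E p := by
    rw [Fintype.linearIndependent_iff]
    intro c hc j
    have := key c j
    rw [hc, Matrix.mulVec_zero] at this
    exact (smul_eq_zero.1 this.symm).resolve_right hv
  have hspan := hli.span_eq_top_of_card_eq_finrank' (by simp [hr])
  let T : G → (Y → E) → (Y → E) := fun h φ y => h • φ (h⁻¹ • y) / F h (h⁻¹ • y)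
  have hT : ∀ h φ x, T h φ (h • x) = h • φ x / F h x := by intro h φ x; simp [T]
  have hTN : ∀ h φ i j, (N i j).mulVec (T h φ) = T h ((N i j).mulVec φ) := by
    intro h φ i j
    funext y
    obtain ⟨x, rfl⟩ := MulAction.surjective h y
    rw [hT]
    simp only [Matrix.mulVec, dotProduct]
    rw [← Equiv.sum_comp (MulAction.toPerm h : Equiv.Perm Y), Finset.smul_sum, Finset.sum_div]
    refine Finset.sum_congr rfl fun z _ => ?_
    simp only [MulAction.toPerm_apply, smul_mul', hT]
    have h1 := hκ (ρ.symm (Matrix.single i j 1)) h x z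
    have n1 := hF h x
    have n2 := hF h z
    field_simp
    change N i j (h • x) (h • z) * F h x = F h z * h • N i j x z at h1
    linear_combination h • φ z * h1
  have hβ : ∀ h, ∃ b : E, T h (p i0) = b • p i0 := by
    intro h
    have : T h (p i0) ∈ Submodule.span E (Set.range p) := by rw [hspan]; trivial
    obtain ⟨c, hc⟩ := (Submodule.mem_span_range_iff_exists_fun E).1 this
    refine ⟨c i0, ?_⟩
    rw [← key c i0, hc, hTN, hp]
  choose β hβ using hβ
  refine ⟨p i0, β, hv, fun h x => ?_⟩
  have h1 := congrFun (hβ h) (h • x)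
  rw [hT, div_eq_iff (hF h x)] at h1
  rw [h1, Pi.smul_apply, smul_eq_mul]
  ring

/-- A splitting of a tensor power trivializes the power of the cocycle. -/
lemma exists_cob (hf : Coc f) {m r : ℕ}
    (ρ : (⨂[K] (_ : Fin m), tw K f) ≃ₐ[K] Matrix (Fin r) (Fin r) K) :
    ∃ β : G → E, (∀ g, β g ≠ 0) ∧ ∀ g h, β (g * h) = β g * g • β h * f g h ^ m := by
  have hr : r = Fintype.card (Fin m → G) := by
    have h1 := finrank_tensor (K := K) hf m
    rw [ρ.toLinearEquiv.finrank_eq, Module.finrank_matrix] at h1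
    simp only [Fintype.card_fin, Module.finrank_self, mul_one, ← sq] at h1
    rw [Nat.pow_left_injective (n := 2) (by norm_num) h1]
    simp
  obtain ⟨p, β, hp, hβ⟩ := exists_vec (pf_ne hf m) (kron K f m) (kron_mem m) ρ hr
  obtain ⟨x, hx⟩ := Function.ne_iff.1 hp
  have hx : p x ≠ 0 := hx
  refine ⟨β, fun g hg => ?_, fun g h => ?_⟩
  · have := hβ g x
    rw [hg, zero_mul, zero_mul, smul_eq_zero_iff_eq] at this
    exact hx this
  · obtain ⟨y, rfl⟩ := MulAction.surjective (g * h) x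
    have h1 := hβ (g * h) y
    rw [mul_smul, hβ h y, smul_mul', smul_mul', pf_fix hf, hβ g (h • y)] at h1
    have h2 := pf_coc hf m g h y
    have n1 := pf_ne hf m (g * h) y
    rw [← mul_smul] at h1
    apply mul_right_cancel₀ (mul_ne_zero n1 hx)
    linear_combination - h1 - (g • β h) * β g * p ((g * h) • y) * h2

lemma norm_eq (hf : Coc f) {m : ℕ} {β : G → E} (hβ0 : ∀ g, β g ≠ 0)
    (hβ : ∀ g h, β (g * h) = β g * g • β h * f g h ^ m) (s : G) (e : ℕ) :
    β (s ^ e) = (∏ j ∈ Finset.range e, s ^ j • β s) * (∏ j ∈ Finset.range e, f (s ^ j) s) ^ m := by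
  induction e with
  | zero =>
    have := hβ 1 1
    rw [one_mul, one_smul, hf.one_left, one_pow, mul_one] at this
    simp only [pow_zero, Finset.range_zero, Finset.prod_empty, one_pow, mul_one]
    exact (mul_left_cancel₀ (hβ0 1) (by rw [← this, mul_one])).symm
  | succ e ih =>
    rw [pow_succ, hβ, ih, Finset.prod_range_succ, Finset.prod_range_succ, mul_pow]
    ring

end D
end S8


namespace S8

set_option linter.unusedSectionVars false

section F
variable {k K ε D M : Type*} [Field k] [Field K] [Algebra k K] [Ring ε] [Algebra K ε]
  [Algebra k ε] [IsScalarTower k K ε] [Monoid M] [Ring D] [Algebra k D]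

/-- The comparison map. -/
noncomputable def TT (k : Type*) [Field k] [Algebra k ε] [Algebra k D] (e : M →* ε) :
    MonoidAlgebra D M →+* ε ⊗[k] D :=
  MonoidAlgebra.liftNCRingHom
    (Algebra.TensorProduct.includeRight : D →ₐ[k] ε ⊗[k] D).toRingHom
    (((Algebra.TensorProduct.includeLeft : ε →ₐ[k] ε ⊗[k] D) : ε →* ε ⊗[k] D).comp e)
    (fun x y => by
      simp [Commute, SemiconjBy])

lemma TT_single (e : M →* ε) (a : M) (b : D) :
    TT k e (MonoidAlgebra.single a b) = e a ⊗ₜ b := by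
  simp [TT]

lemma TT_injective (e : M →* ε) (hli : LinearIndependent k e) :
    Function.Injective (TT (D := D) k e) := by
  rw [injective_iff_map_eq_zero]
  intro p hp
  have key : ∀ φ : Module.Dual k D, ∀ a, φ (p.coeff a) = 0 := by
    intro φ
    have h1 : ∀ q : MonoidAlgebra D M,
        TensorProduct.rid k ε (LinearMap.lTensor ε φ (TT k e q)) =
          Finsupp.linearCombination k e (q.coeff.mapRange φ (map_zero φ)) := by
      intro q
      induction q using MonoidAlgebra.induction_linear with
      | zero => simp
      | add a b ha hb =>
        rw [map_add, map_add, map_add, ha, hb, MonoidAlgebra.coeff_add, Finsupp.mapRange_add (map_add φ), map_add]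
      | single a b => simp [TT_single]
    have h2 := h1 p
    rw [hp, map_zero, map_zero] at h2
    have h3 := (linearIndependent_iff.1 hli) _ h2.symm
    intro a
    have := DFunLike.congr_fun h3 a
    simpa using this
  ext a
  exact (Module.forall_dual_apply_eq_zero_iff k _).1 fun φ => key φ a

lemma TT_range (e : M →* ε) {z : ε} (hz : z ∈ Submodule.span k (Set.range e)) (x : D) :
    z ⊗ₜ[k] x ∈ (TT (D := D) k e).range := by
  induction hz using Submodule.span_induction generalizing x with
  | mem z h =>
    obtain ⟨a, rfl⟩ := h
    exact ⟨_, TT_single e a x⟩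
  | zero => rw [TensorProduct.zero_tmul]; exact Subring.zero_mem _
  | add a b _ _ ha hb => rw [TensorProduct.add_tmul]; exact Subring.add_mem _ (ha x) (hb x)
  | smul c a _ ha => rw [TensorProduct.smul_tmul]; exact ha _

lemma dom_tensor [UniqueProds M] [NoZeroDivisors D] (e : M →* ε) (hli : LinearIndependent k e)
    (hden : ∀ (N : ℕ) (z : Fin N → ε), ∃ s : K, s ≠ 0 ∧
      ∀ i, s • z i ∈ Submodule.span k (Set.range e)) : NoZeroDivisors (ε ⊗[k] D) := by
  have h1 : ∀ x : ε ⊗[k] D, ∃ s : K, s ≠ 0 ∧ s • x ∈ (TT (D := D) k e).range := by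
    intro x
    obtain ⟨N, z, y, rfl⟩ := TensorProduct.exists_sum_tmul_eq x
    obtain ⟨s, hs, h⟩ := hden N z
    refine ⟨s, hs, ?_⟩
    rw [Finset.smul_sum]
    refine Subring.sum_mem _ fun i _ => ?_
    rw [TensorProduct.smul_tmul']
    exact TT_range e (h i) _
  constructor
  intro x y hxy
  obtain ⟨s, hs, p, hp⟩ := h1 x
  obtain ⟨t, ht, q, hq⟩ := h1 y
  have h2 : TT k e (p * q) = 0 := by
    rw [map_mul, hp, hq, smul_mul_smul_comm, hxy, smul_zero]
  rw [← map_zero (TT (D := D) k e)] at h2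
  rcases mul_eq_zero.1 (TT_injective e hli h2) with h | h
  · left
    rw [h, map_zero] at hp
    exact (smul_eq_zero.1 hp.symm).resolve_left hs
  · right
    rw [h, map_zero] at hq
    exact (smul_eq_zero.1 hq.symm).resolve_left ht

lemma dom_self [UniqueProds M] (e : M →* ε) (hli : LinearIndependent k e)
    (hden : ∀ (N : ℕ) (z : Fin N → ε), ∃ s : K, s ≠ 0 ∧
      ∀ i, s • z i ∈ Submodule.span k (Set.range e)) : NoZeroDivisors ε := by
  have := dom_tensor (D := k) e hli hden
  exact (Algebra.TensorProduct.rid k k ε).symm.injective.noZeroDivisors _ (map_zero _) (map_mul _)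

end F

lemma unit_tensor {k ε D : Type*} [Field k] [DivisionRing ε] [DivisionRing D] [Algebra k ε]
    [Algebra k D] [FiniteDimensional k D] [NoZeroDivisors (ε ⊗[k] D)] (x : D ⊗[k] ε) (hx : x ≠ 0) :
    IsUnit x := by
  let c := Algebra.TensorProduct.comm k D ε
  suffices h : IsUnit (c x) by
    have := h.map c.symm
    simpa using this
  have hy : c x ≠ 0 := by simpa using hx
  generalize c x = y at hy
  have hfin : Module.Finite ε (ε ⊗[k] D) := inferInstance
  let R : (ε ⊗[k] D) →ₗ[ε] (ε ⊗[k] D) :=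
    { toFun := fun z => z * y
      map_add' := fun a b => add_mul _ _ _
      map_smul' := fun a b => smul_mul_assoc _ _ _ }
  have hinj : Function.Injective R := by
    rw [← LinearMap.ker_eq_bot, LinearMap.ker_eq_bot']
    intro z hz
    exact (mul_eq_zero.1 hz).resolve_right hy
  obtain ⟨w, hw⟩ := LinearMap.surjective_of_injective hinj 1
  have hw : w * y = 1 := hw
  have : y * w = 1 := by
    have h0 : (y * w - 1) * y = 0 := by rw [sub_mul, mul_assoc, hw]; simp
    exact sub_eq_zero.1 ((mul_eq_zero.1 h0).resolve_right hy)
  exact ⟨⟨y, w, this, hw⟩, rfl⟩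
end S8


namespace S8

set_option linter.unusedSectionVars false

section H
variable {ι : Type} [Fintype ι] [DecidableEq ι] (m : ι → ℕ) [∀ i, NeZero (m i)]

/-- The group. -/
abbrev Gr := Multiplicative (∀ i, ZMod (m i))

variable {m}

/-- Permutation of variables. -/
def permV (g : Gr m) : Gr m ⊕ ι → Gr m ⊕ ι := Sum.map (g * ·) id

lemma permV_one : permV (1 : Gr m) = id := by
  funext x; cases x <;> simp [permV]

lemma permV_mul (g h : Gr m) : permV (g * h) = permV g ∘ permV h := by
  funext x; cases x <;> simp [permV, mul_assoc]

lemma permV_inj (g : Gr m) : Function.Injective (permV g) := by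
  apply Function.LeftInverse.injective (g := permV g⁻¹)
  intro x
  rw [← Function.comp_apply (f := permV g⁻¹), ← permV_mul]
  simp [permV_one]

variable (m) in
/-- The polynomial ring. -/
abbrev PP (k : Type*) [Field k] := MvPolynomial (Gr m ⊕ ι) k

variable {k : Type*} [Field k]

noncomputable instance actP : MulSemiringAction (Gr m) (PP m k) where
  smul g p := MvPolynomial.rename (permV g) p
  one_smul p := by
    change MvPolynomial.rename (permV 1) p = p
    rw [permV_one, MvPolynomial.rename_id_apply]
  mul_smul g h p := by
    change MvPolynomial.rename (permV (g * h)) p =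
      MvPolynomial.rename (permV g) (MvPolynomial.rename (permV h) p)
    rw [permV_mul, MvPolynomial.rename_rename]
  smul_zero g := map_zero (MvPolynomial.rename (permV g))
  smul_add g := map_add (MvPolynomial.rename (permV g))
  smul_one g := map_one (MvPolynomial.rename (permV g))
  smul_mul g := map_mul (MvPolynomial.rename (permV g))

lemma smul_def (g : Gr m) (p : PP m k) : g • p = MvPolynomial.rename (permV g) p := rfl

variable (m k) in
/-- The function field. -/
abbrev EE := FractionRing (PP m k)

noncomputable instance actE : MulSemiringAction (Gr m) (EE m k) :=
  IsFractionRing.mulSemiringAction (Gr m) (PP m k) (EE m k)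

instance sdE : SMulDistribClass (Gr m) (PP m k) (EE m k) :=
  IsFractionRing.smulDistribClass (Gr m) (PP m k) (EE m k)

lemma smul_algMap (g : Gr m) (p : PP m k) :
    g • algebraMap (PP m k) (EE m k) p = algebraMap (PP m k) (EE m k) (g • p) :=
  (algebraMap.coe_smul' g p _).symm

instance faithP : FaithfulSMul (Gr m) (PP m k) := by
  constructor
  intro g h H
  have := H (MvPolynomial.X (Sum.inl 1))
  rw [smul_def, smul_def, MvPolynomial.rename_X, MvPolynomial.rename_X] at this
  have := MvPolynomial.X_injective this
  simpa [permV] using this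

instance faithE : FaithfulSMul (Gr m) (EE m k) :=
  IsFractionRing.faithfulSMul (Gr m) (PP m k) (EE m k)

instance commE : SMulCommClass (Gr m) k (EE m k) := by
  constructor
  intro g c x
  rw [Algebra.smul_def, Algebra.smul_def, smul_mul', IsScalarTower.algebraMap_apply k (PP m k) (EE m k),
    smul_algMap, smul_def, MvPolynomial.algebraMap_eq, MvPolynomial.rename_C]

lemma exists_K {k : Type u} [Field k] : ∃ (K : Type u) (_ : Field K) (_ : Algebra k K)
    (_ : Algebra K (EE m k)) (_ : IsScalarTower k K (EE m k)) (_ : SMulCommClass (Gr m) K (EE m k)),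
    IsGaloisGroup (Gr m) K (EE m k) := by
  have h1 : IsGaloisGroup (Gr m) (FixedPoints.intermediateField (Gr m) :
      IntermediateField k (EE m k)) (EE m k) :=
    inferInstanceAs (IsGaloisGroup (Gr m) (FixedPoints.subfield (Gr m) (EE m k)) (EE m k))
  exact ⟨(FixedPoints.intermediateField (Gr m) :
      IntermediateField k (EE m k)), inferInstance, inferInstance, inferInstance, inferInstance,
      h1.commutes, h1⟩

variable (m k) in
/-- the parameters -/
noncomputable def tt (i : ι) : EE m k := algebraMap (PP m k) (EE m k) (MvPolynomial.X (Sum.inr i))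

lemma tt_ne (i : ι) : tt m k i ≠ 0 := by
  rw [tt, Ne, FaithfulSMul.algebraMap_eq_zero_iff]
  exact MvPolynomial.X_ne_zero _

lemma smul_tt (g : Gr m) (i : ι) : g • tt m k i = tt m k i := by
  rw [tt, smul_algMap, smul_def, MvPolynomial.rename_X]; rfl

/-- the carry -/
def carry (g h : Gr m) (i : ι) : ℕ := ((g.toAdd i).val + (h.toAdd i).val) / m i

variable (m k) in
/-- the cocycle -/
noncomputable def ff (g h : Gr m) : EE m k := ∏ i, tt m k i ^ carry g h i

lemma div_aux (a b m : ℕ) (hm : 0 < m) : (a % m + b) / m + a / m = (a + b) / m := by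
  conv_rhs => rw [← Nat.mod_add_div a m]
  rw [show a % m + m * (a / m) + b = a % m + b + m * (a / m) by ring, Nat.add_mul_div_left _ _ hm]

lemma carry_coc (h x g : Gr m) (i : ι) :
    carry (h * x) g i + carry h x i = carry h (x * g) i + carry x g i := by
  have hm : 0 < m i := Nat.pos_of_ne_zero (NeZero.ne _)
  simp only [carry, toAdd_mul, Pi.add_apply, ZMod.val_add]
  rw [div_aux _ _ _ hm, add_comm (h.toAdd i).val (_ % _), div_aux _ _ _ hm]
  congr 1; ring

lemma ff_coc : Coc (ff m k) where
  ne g h := Finset.prod_ne_zero_iff.2 fun i _ => pow_ne_zero _ (tt_ne i)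
  fix s g h := by simp [ff, Finset.smul_prod', smul_pow', smul_tt]
  one_left g := by
    refine Finset.prod_eq_one fun i _ => ?_
    rw [show carry 1 g i = 0 by simp [carry, Nat.div_eq_of_lt (ZMod.val_lt _)], pow_zero]
  one_right g := by
    refine Finset.prod_eq_one fun i _ => ?_
    rw [show carry g 1 i = 0 by simp [carry, Nat.div_eq_of_lt (ZMod.val_lt _)], pow_zero]
  coc h x g := by
    simp only [ff, ← Finset.prod_mul_distrib, ← pow_add, carry_coc]

lemma card_Gr : Fintype.card (Gr m) = ∏ i, m i := by
  rw [Fintype.card_multiplicative, Fintype.card_pi]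
  simp [ZMod.card]

/-- The trivialization of the power of the cocycle. -/
lemma exists_beta {d : ℕ} (hd : ∀ i, m i ∣ d) : ∃ β : Gr m → EE m k, (∀ g, β g ≠ 0) ∧
    (∀ s g : Gr m, s • β g = β g) ∧ ∀ g h, ff m k g h ^ d * β (g * h) = β g * β h := by
  refine ⟨fun g => ∏ i, tt m k i ^ ((d / m i) * (g.toAdd i).val), ?_, ?_, ?_⟩
  · exact fun g => Finset.prod_ne_zero_iff.2 fun i _ => pow_ne_zero _ (tt_ne i)
  · intro s g; simp [Finset.smul_prod', smul_pow', smul_tt]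
  · intro g h
    simp only [ff, ← Finset.prod_pow, ← Finset.prod_mul_distrib, ← pow_add, ← pow_mul]
    refine Finset.prod_congr rfl fun i _ => ?_
    congr 1
    obtain ⟨c, rfl⟩ := hd i
    have hm : 0 < m i := Nat.pos_of_ne_zero (NeZero.ne _)
    rw [Nat.mul_div_cancel_left _ hm]
    simp only [carry, toAdd_mul, Pi.add_apply, ZMod.val_add]
    have := Nat.mod_add_div ((g.toAdd i).val + (h.toAdd i).val) (m i)
    linear_combination c * this

lemma degreeOf_smul (i : ι) (g : Gr m) (p : PP m k) :
    (g • p).degreeOf (Sum.inr i) = p.degreeOf (Sum.inr i) := by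
  have := MvPolynomial.degreeOf_rename_of_injective (p := p) (permV_inj g) (Sum.inr i)
  rw [smul_def, ← this]; rfl

lemma degreeOf_norm (i : ι) (g : Gr m) (p : PP m k) (hp : p ≠ 0) (d : ℕ) :
    ∏ j ∈ Finset.range d, g ^ j • p ≠ 0 ∧
    (∏ j ∈ Finset.range d, g ^ j • p).degreeOf (Sum.inr i) = d * p.degreeOf (Sum.inr i) := by
  have h0 : ∀ j, g ^ j • p ≠ 0 := fun j => by
    rwa [Ne, smul_eq_zero_iff_eq]
  have hn : ∀ d, ∏ j ∈ Finset.range d, g ^ j • p ≠ 0 := fun d =>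
    Finset.prod_ne_zero_iff.2 fun j _ => h0 j
  refine ⟨hn d, ?_⟩
  induction d with
  | zero => simp
  | succ d ih =>
    rw [Finset.prod_range_succ, MvPolynomial.degreeOf_mul_eq (hn d) (h0 d), ih, degreeOf_smul]
    ring

/-- degree argument -/
lemma no_norm {d e : ℕ} (i : ι) (b : EE m k) (hb : b ≠ 0) (s : Gr m)
    (h : (∏ j ∈ Finset.range d, s ^ j • b) * tt m k i ^ e = 1) : d ∣ e := by
  obtain ⟨p, q, hq, rfl⟩ := IsFractionRing.div_surjective (A := PP m k) b
  have hq0 : q ≠ 0 := nonZeroDivisors.ne_zero hq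
  have hp0 : p ≠ 0 := by
    rintro rfl
    simp at hb
  obtain ⟨nq, dq⟩ := degreeOf_norm i s q hq0 d
  obtain ⟨np, dp⟩ := degreeOf_norm i s p hp0 d
  simp only [smul_div₀', Finset.prod_div_distrib, smul_algMap, tt, ← map_prod, ← map_pow] at h
  rw [div_mul_eq_mul_div, div_eq_one_iff_eq (by rwa [Ne, FaithfulSMul.algebraMap_eq_zero_iff]),
    ← map_mul] at h
  have h1 := IsFractionRing.injective (PP m k) (EE m k) h
  have h2 := congrArg (MvPolynomial.degreeOf (Sum.inr i)) h1
  rw [MvPolynomial.degreeOf_mul_eq np (pow_ne_zero _ (MvPolynomial.X_ne_zero _)), dp, dq,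
    MvPolynomial.degreeOf_pow_eq _ _ _ (MvPolynomial.X_ne_zero _), MvPolynomial.degreeOf_X,
    if_pos rfl, mul_one] at h2
  exact (Nat.dvd_add_right (Dvd.intro _ rfl)).1 (h2 ▸ Dvd.intro _ rfl)

/-- the generator -/
def gen (m : ι → ℕ) (i : ι) : Gr m := Multiplicative.ofAdd (Pi.single i 1)

lemma gen_pow (i : ι) (j : ℕ) : gen m i ^ j = Multiplicative.ofAdd (Pi.single i (j : ZMod (m i))) := by
  rw [gen, ← ofAdd_nsmul, ← Pi.single_smul]; simp

lemma prod_ff (i : ι) (h : 1 < m i) :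
    ∏ j ∈ Finset.range (m i), ff m k (gen m i ^ j) (gen m i) = tt m k i := by
  have hm : 0 < m i := Nat.pos_of_ne_zero (NeZero.ne _)
  have h1 : ∀ j ∈ Finset.range (m i), ff m k (gen m i ^ j) (gen m i) =
      if j = m i - 1 then tt m k i else 1 := by
    intro j hj
    rw [Finset.mem_range] at hj
    rw [ff, Finset.prod_eq_single i]
    · rw [gen_pow]
      simp only [carry, gen, toAdd_ofAdd, Pi.single_eq_same, ZMod.val_natCast,
        Nat.mod_eq_of_lt hj]
      rw [ZMod.val_one_eq_one_mod, Nat.mod_eq_of_lt h]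
      split_ifs with h2
      · rw [h2, Nat.sub_add_cancel hm, Nat.div_self hm, pow_one]
      · rw [Nat.div_eq_of_lt (by omega), pow_zero]
    · intro l _ hl
      rw [gen_pow]
      simp [carry, gen, hl]
    · simp
  rw [Finset.prod_congr rfl h1, Finset.prod_ite_eq', if_pos (Finset.mem_range.2 (by omega))]

lemma not_split {K : Type*} [Field K] [Algebra K (EE m k)] [SMulCommClass (Gr m) K (EE m k)]
    [IsGaloisGroup (Gr m) K (EE m k)] (i : ι) {e : ℕ} (he : 0 < e) (hei : e < m i) (r : ℕ) :
    ¬ Nonempty ((⨂[K] (_ : Fin e), tw (K) (ff m k)) ≃ₐ[K]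
      Matrix (Fin r) (Fin r) (K)) := by
  rintro ⟨ρ⟩
  obtain ⟨β, hβ0, hβ⟩ := exists_cob ff_coc ρ
  have h1 := norm_eq ff_coc hβ0 hβ (gen m i) (m i)
  have h0 := norm_eq ff_coc hβ0 hβ (gen m i) 0
  have h2 : gen m i ^ (m i) = 1 := by
    rw [gen_pow]; simp
  rw [pow_zero] at h0
  rw [h2, h0, prod_ff i (by omega)] at h1
  simp only [Finset.range_zero, Finset.prod_empty, one_pow, mul_one] at h1
  have := Nat.le_of_dvd he (no_norm i _ (hβ0 _) _ h1.symm)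
  omega
end H
end S8


namespace S8

set_option linter.unusedSectionVars false

lemma rowMat_single_mul (K : Type*) {E G : Type*} [Field K] [Field E] [Algebra K E] [Group G]
    [MulSemiringAction G E] [Fintype G] [DecidableEq G] [SMulCommClass G K E] {f : G → G → E}
    (hf : Coc f) (g h : G) (A B : E) :
    rowMat f (Pi.single g A) * rowMat f (Pi.single h B) =
      rowMat f (Pi.single (g * h) (A * f g h * g • B)) := by
  have h1 := eq_rowMat hf ((tw K f).mul_mem (rowMat_mem (K := K) hf (Pi.single g A))
    (rowMat_mem (K := K) hf (Pi.single h B)))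
  rw [h1]
  congr 1
  funext y
  rw [Matrix.mul_apply, Finset.sum_eq_single g]
  · simp only [rowMat, inv_one, one_mul, hf.one_left, one_smul, Pi.single_eq_same]
    by_cases hy : y = g * h
    · subst hy; simp [mul_assoc]
    · have : g⁻¹ * y ≠ h := by rwa [Ne, inv_mul_eq_iff_eq_mul]
      simp [hy, this]
  · intro z _ hz
    simp [rowMat, hz]
  · simp

section I
variable {ι : Type} [Fintype ι] [DecidableEq ι] (m : ι → ℕ) [∀ i, NeZero (m i)]

/-- The monoid of monomials. -/
@[ext]
structure MM where
  b : Gr m → ℕ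
  a : ι → ℕ

/-- class of an exponent -/
def cls (a : ι → ℕ) : Gr m := Multiplicative.ofAdd fun i => (a i : ZMod (m i))

variable {m}

lemma cls_zero : cls m 0 = 1 := by
  rw [cls, ← ofAdd_zero]; congr 1; funext i; simp

lemma cls_add (a a' : ι → ℕ) : cls m (a + a') = cls m a * cls m a' := by
  rw [cls, cls, cls, ← ofAdd_add]; congr 1; funext i; simp

instance : Monoid (MM m) where
  mul x y := ⟨fun g => x.b g + y.b ((cls m x.a)⁻¹ * g), x.a + y.a⟩
  one := ⟨0, 0⟩
  mul_assoc x y z := by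
    apply MM.ext
    · funext g
      change x.b g + y.b ((cls m x.a)⁻¹ * g) + z.b ((cls m (x.a + y.a))⁻¹ * g) =
        x.b g + (y.b ((cls m x.a)⁻¹ * g) + z.b ((cls m y.a)⁻¹ * ((cls m x.a)⁻¹ * g)))
      rw [cls_add, mul_inv_rev, mul_assoc, add_assoc]
    · exact add_assoc _ _ _
  one_mul x := by
    apply MM.ext
    · funext g
      change 0 + x.b ((cls m 0)⁻¹ * g) = x.b g
      simp [cls_zero]
    · exact zero_add _
  mul_one x := by
    apply MM.ext
    · funext g
      rfl
    · exact add_zero _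

lemma mul_b (x y : MM m) (g) : (x * y).b g = x.b g + y.b ((cls m x.a)⁻¹ * g) := rfl
lemma mul_a (x y : MM m) : (x * y).a = x.a + y.a := rfl
lemma one_a : (1 : MM m).a = 0 := rfl
lemma one_b : (1 : MM m).b = 0 := rfl

instance : UniqueProds (MM m) := by
  classical
  constructor
  intro A B hA hB
  let π : MM m →ₙ* Multiplicative (ι → ℕ) :=
    { toFun := fun x => Multiplicative.ofAdd x.a
      map_mul' := fun x y => rfl }
  obtain ⟨a0, ha0, b0, hb0, hu⟩ := UniqueProds.uniqueMul_of_nonempty (hA.image π) (hB.image π)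
  obtain ⟨a1, ha1, hae⟩ := Finset.mem_image.1 ha0
  obtain ⟨b1, hb1, hbe⟩ := Finset.mem_image.1 hb0
  let A' := {a ∈ A | π a = a0}
  let B' := {b ∈ B | π b = b0}
  let c : Gr m := cls m a0.toAdd
  let fA : MM m → Multiplicative (Gr m → ℕ) := fun x => Multiplicative.ofAdd x.b
  let fB : MM m → Multiplicative (Gr m → ℕ) := fun x => Multiplicative.ofAdd fun g => x.b (c⁻¹ * g)
  have hA' : A'.Nonempty := ⟨a1, Finset.mem_filter.2 ⟨ha1, hae⟩⟩
  have hB' : B'.Nonempty := ⟨b1, Finset.mem_filter.2 ⟨hb1, hbe⟩⟩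
  obtain ⟨u, hu0, v, hv0, huv⟩ := UniqueProds.uniqueMul_of_nonempty (hA'.image fA) (hB'.image fB)
  obtain ⟨x, hx, rfl⟩ := Finset.mem_image.1 hu0
  obtain ⟨y, hy, rfl⟩ := Finset.mem_image.1 hv0
  have hx' := Finset.mem_filter.1 hx
  have hy' := Finset.mem_filter.1 hy
  have ha : ∀ z ∈ A', z.a = a0.toAdd := by
    intro z hz
    have := (Finset.mem_filter.1 hz).2
    rw [← this]; rfl
  have hb : ∀ z ∈ B', z.a = b0.toAdd := by
    intro z hz
    have := (Finset.mem_filter.1 hz).2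
    rw [← this]; rfl
  have hprod : ∀ p ∈ A', ∀ q : MM m, fA p * fB q = Multiplicative.ofAdd (p * q).b := by
    intro p hp q
    apply Multiplicative.toAdd.injective
    funext g
    simp only [fA, fB, toAdd_mul, toAdd_ofAdd, Pi.add_apply, mul_b, ha p hp, c]
  refine ⟨x, hx'.1, y, hy'.1, UniqueMul.of_image_filter π hx'.2 hy'.2 hu ?_⟩
  intro p q hp hq hpq
  have h1 := huv (Finset.mem_image_of_mem fA hp) (Finset.mem_image_of_mem fB hq)
    (by rw [hprod p hp, hprod x hx, hpq])
  constructor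
  · exact MM.ext (Multiplicative.ofAdd.injective h1.1) ((ha p hp).trans (ha x hx).symm)
  · refine MM.ext ?_ ((hb q hq).trans (hb y hy).symm)
    funext g
    have := congrFun (Multiplicative.ofAdd.injective h1.2) (c * g)
    simpa using this

/-- exponent of the monomial -/
noncomputable def expo (x : MM m) : Gr m ⊕ ι →₀ ℕ :=
  Finsupp.equivFunOnFinite.symm (Sum.elim x.b fun i => x.a i / m i)

/-- index of the basis -/
noncomputable def xi (x : MM m) : Σ _ : Gr m, (Gr m ⊕ ι →₀ ℕ) := ⟨cls m x.a, expo x⟩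

lemma xi_bij : Function.Bijective (xi (m := m)) := by
  constructor
  · intro x y h
    have h1 : cls m x.a = cls m y.a := congrArg Sigma.fst h
    have h2 : expo x = expo y := congrArg Sigma.snd h
    apply MM.ext
    · funext g
      simpa [expo] using DFunLike.congr_fun h2 (Sum.inl g)
    · funext i
      have h3 : x.a i / m i = y.a i / m i := by
        simpa [expo] using DFunLike.congr_fun h2 (Sum.inr i)
      have h4 : (x.a i : ZMod (m i)) = y.a i := congrFun (Multiplicative.ofAdd.injective h1) i
      rw [ZMod.natCast_eq_natCast_iff'] at h4
      rw [← Nat.mod_add_div (x.a i) (m i), h3, h4, Nat.mod_add_div]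
  · rintro ⟨g, v⟩
    refine ⟨⟨fun h => v (Sum.inl h), fun i => (g.toAdd i).val + m i * v (Sum.inr i)⟩, ?_⟩
    have h1 : cls m (fun i => (g.toAdd i).val + m i * v (Sum.inr i)) = g := by
      apply Multiplicative.toAdd.injective
      funext i
      simp [cls]
    refine Sigma.ext h1 (heq_of_eq ?_)
    change expo _ = v
    ext z
    rcases z with z | i
    · simp [expo]
    · have hm : 0 < m i := Nat.pos_of_ne_zero (NeZero.ne _)
      simp [expo, Nat.add_mul_div_left _ _ hm, Nat.div_eq_of_lt (ZMod.val_lt _)]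

variable {k K : Type*} [Field k] [Field K] [Algebra k K] [Algebra K (EE m k)]
    [IsScalarTower k K (EE m k)] [SMulCommClass (Gr m) K (EE m k)]

/-- The integral part of the algebra. -/
noncomputable def Phi (K : Type*) [Field K] [Algebra k K] [Algebra K (EE m k)]
    [IsScalarTower k K (EE m k)] [SMulCommClass (Gr m) K (EE m k)] :
    (Gr m → PP m k) →ₗ[k] tw K (ff m k) where
  toFun α := ⟨rowMat (ff m k) fun g => algebraMap (PP m k) (EE m k) (α g), rowMat_mem ff_coc _⟩
  map_add' α β := by
    apply Subtype.ext
    apply Matrix.ext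
    intro x y
    change ff m k x (x⁻¹ * y) * x • algebraMap (PP m k) (EE m k) (α (x⁻¹ * y) + β (x⁻¹ * y)) =
      ff m k x (x⁻¹ * y) * x • algebraMap (PP m k) (EE m k) (α (x⁻¹ * y)) +
      ff m k x (x⁻¹ * y) * x • algebraMap (PP m k) (EE m k) (β (x⁻¹ * y))
    rw [map_add, smul_add, mul_add]
  map_smul' c α := by
    apply Subtype.ext
    apply Matrix.ext
    intro x y
    change ff m k x (x⁻¹ * y) * x • algebraMap (PP m k) (EE m k) (c • α (x⁻¹ * y)) =
      c • (ff m k x (x⁻¹ * y) * x • algebraMap (PP m k) (EE m k) (α (x⁻¹ * y)))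
    rw [Algebra.algebraMap_eq_smul_one, smul_assoc, ← Algebra.algebraMap_eq_smul_one,
      smul_comm x c, mul_smul_comm c]

lemma Phi_row (α : Gr m → PP m k) (g : Gr m) :
    rowEquiv (K := K) ff_coc (Phi K α) g = algebraMap (PP m k) (EE m k) (α g) := by
  change ff m k 1 (1⁻¹ * g) * (1 : Gr m) • algebraMap (PP m k) (EE m k) (α (1⁻¹ * g)) = _
  rw [ff_coc.one_left, inv_one, one_mul, one_mul, one_smul]

lemma Phi_single (g : Gr m) (p : PP m k) :
    (Phi K (Pi.single g p)).1 = rowMat (ff m k) (Pi.single g (algebraMap (PP m k) (EE m k) p)) := by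
  change rowMat (ff m k) (fun h => algebraMap (PP m k) (EE m k) ((Pi.single g p : Gr m → PP m k) h)) = _
  congr 1
  funext h
  by_cases hh : h = g
  · subst hh; simp
  · simp [hh]

lemma Phi_inj : Function.Injective (Phi (m := m) (k := k) K) := by
  intro α β h
  have h1 := congrArg (rowEquiv (K := K) ff_coc) h
  funext g
  have h2 := congrFun h1 g
  rw [Phi_row, Phi_row] at h2
  exact IsFractionRing.injective (PP m k) (EE m k) h2

lemma expo_one : expo (1 : MM m) = 0 := by
  ext z
  rcases z with z | i
  · simp [expo, one_b]
  · simp [expo, one_a]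

lemma smul_mono (g : Gr m) (x : MM m) :
    g • MvPolynomial.monomial (expo x) (1 : k) = MvPolynomial.monomial (expo (⟨fun h => x.b (g⁻¹ * h), x.a⟩ : MM m)) 1 := by
  rw [smul_def, MvPolynomial.rename_monomial]
  refine congrArg (fun v => MvPolynomial.monomial v (1 : k)) ?_
  ext z
  rcases z with z | i
  · have := Finsupp.mapDomain_apply (permV_inj g) (expo x) (Sum.inl (g⁻¹ * z))
    simpa [permV, expo] using this
  · have := Finsupp.mapDomain_apply (permV_inj g) (expo x) (Sum.inr i)
    simpa [permV, expo] using this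

/-- The embedding of the monoid. -/
noncomputable def emb (K : Type*) [Field K] [Algebra k K] [Algebra K (EE m k)]
    [IsScalarTower k K (EE m k)] [SMulCommClass (Gr m) K (EE m k)] :
    MM m →* tw K (ff m k) where
  toFun x := Phi K (Pi.single (cls m x.a) (MvPolynomial.monomial (expo x) 1))
  map_one' := by
    apply Subtype.ext
    rw [Phi_single, one_a, cls_zero, expo_one]
    apply Matrix.ext
    intro x y
    change rowMat _ _ x y = (1 : Matrix (Gr m) (Gr m) (EE m k)) x y
    by_cases h : x = y
    · subst h; simp [rowMat, ff_coc.one_right]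
    · have : x⁻¹ * y ≠ 1 := by rwa [Ne, inv_mul_eq_one]
      simp [rowMat, h, this]
  map_mul' x y := by
    apply Subtype.ext
    rw [MulMemClass.coe_mul, Phi_single, Phi_single, Phi_single, rowMat_single_mul K ff_coc,
      mul_a, cls_add, smul_algMap, smul_mono]
    congr 2
    rw [ff]
    simp only [tt, ← map_pow, ← map_prod, ← map_mul]
    congr 1
    have h1 : ∏ i, (MvPolynomial.X (Sum.inr i) : PP m k) ^ carry (cls m x.a) (cls m y.a) i =
        MvPolynomial.monomial (∑ i, Finsupp.single (Sum.inr i) (carry (cls m x.a) (cls m y.a) i)) 1 := by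
      rw [MvPolynomial.monomial_sum_one]
      simp [MvPolynomial.X_pow_eq_monomial]
    rw [h1, MvPolynomial.monomial_mul, MvPolynomial.monomial_mul, one_mul, one_mul]
    refine congrArg (fun v => MvPolynomial.monomial v (1 : k)) ?_
    ext z
    rcases z with z | i
    · simp [expo, mul_b, Finsupp.finsetSum_apply]
    · simp only [expo, mul_a, Finsupp.add_apply, Finsupp.finsetSum_apply, Finsupp.single_apply,
        Sum.inr.injEq, Finset.sum_ite_eq', Finset.mem_univ, if_true,
        Finsupp.equivFunOnFinite_symm_apply_apply, Sum.elim_inr, Pi.add_apply]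
      have hm : 0 < m i := Nat.pos_of_ne_zero (NeZero.ne _)
      simp only [carry, cls, toAdd_ofAdd, ZMod.val_natCast]
      have h2 := div_aux (x.a i) (y.a i) (m i) hm
      have h3 := div_aux (y.a i) (x.a i % m i) (m i) hm
      rw [add_comm (y.a i % m i), add_comm (y.a i)] at h3
      omega

lemma emb_apply (x : MM m) : emb (k := k) K x =
    Phi K (Pi.basis (fun _ : Gr m => MvPolynomial.basisMonomials (Gr m ⊕ ι) k) (xi x)) := by
  rw [Pi.basis_apply]
  simp [emb, xi]

lemma emb_li : LinearIndependent k (emb (m := m) (k := k) K) := by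
  have h := (Pi.basis (fun _ : Gr m => MvPolynomial.basisMonomials (Gr m ⊕ ι) k)).linearIndependent
  have h1 := (h.comp _ xi_bij.1).map' (Phi K) (LinearMap.ker_eq_bot.2 Phi_inj)
  have h2 : (emb (m := m) (k := k) K : MM m → tw K (ff m k)) = (Phi K) ∘
      (Pi.basis (fun _ : Gr m => MvPolynomial.basisMonomials (Gr m ⊕ ι) k)) ∘ xi := by
    funext x
    exact emb_apply x
  rw [h2]
  exact h1

lemma emb_span : Submodule.span k (Set.range (emb (m := m) (k := k) K)) = LinearMap.range (Phi K) := by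
  have h := (Pi.basis (fun _ : Gr m => MvPolynomial.basisMonomials (Gr m ⊕ ι) k)).span_eq
  rw [← Submodule.map_top, ← h, Submodule.map_span, ← Set.range_comp]
  congr 1
  rw [← xi_bij.2.range_comp]
  congr 1
  funext x
  exact emb_apply x

lemma den [IsGaloisGroup (Gr m) K (EE m k)] (N : ℕ) (z : Fin N → tw K (ff m k)) :
    ∃ s : K, s ≠ 0 ∧ ∀ i, s • z i ∈ Submodule.span k (Set.range (emb (m := m) (k := k) K)) := by
  obtain ⟨b, hb⟩ := IsLocalization.exist_integer_multiples_of_finite (nonZeroDivisors (PP m k))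
    (fun p : Fin N × Gr m => rowEquiv (K := K) ff_coc (z p.1) p.2)
  choose c hc using hb
  let B' : PP m k := ∏ g ∈ Finset.univ.erase (1 : Gr m), g • (b : PP m k)
  have hN : ∏ g : Gr m, g • (b : PP m k) = b * B' := by
    rw [← Finset.mul_prod_erase _ _ (Finset.mem_univ (1 : Gr m)), one_smul]
  have hN0 : ∏ g : Gr m, g • (b : PP m k) ≠ 0 := Finset.prod_ne_zero_iff.2 fun g _ => by
    rw [Ne, smul_eq_zero_iff_eq]
    exact nonZeroDivisors.ne_zero b.2
  obtain ⟨s, hs⟩ := (IsGaloisGroup.isInvariant (G := Gr m) (A := K) (B := EE m k)).isInvariant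
    (algebraMap (PP m k) (EE m k) (∏ g : Gr m, g • (b : PP m k))) (by
      intro g
      rw [smul_algMap, Finset.smul_prod']
      congr 1
      simp only [← mul_smul]
      exact Equiv.prod_comp (Equiv.mulLeft g) (fun h => h • (b : PP m k)))
  refine ⟨s, ?_, fun i => ?_⟩
  · rintro rfl
    rw [map_zero] at hs
    exact hN0 ((FaithfulSMul.algebraMap_eq_zero_iff (PP m k) (EE m k)).1 hs.symm)
  · rw [emb_span]
    refine ⟨fun g => B' * c (i, g), ?_⟩
    apply (rowEquiv (K := K) ff_coc).injective
    rw [map_smul]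
    funext g
    rw [Phi_row, map_mul, hc (i, g), Pi.smul_apply, Algebra.smul_def, Algebra.smul_def, hs, hN,
      map_mul]
    ring
end I
end S8


namespace S8

set_option linter.unusedSectionVars false

lemma exists_m (d n : ℕ) (hd : 0 < d) (hn : 0 < n) (hdvd : d ∣ n)
    (hsf : ∀ p : ℕ, p.Prime → p ∣ n → p ∣ d) :
    ∃ (l : ℕ) (m : Option (Fin l) → ℕ), m none = d ∧ (∀ i, m i ≠ 0) ∧ (∀ i, m i ∣ d) ∧
      ∏ i, m i = n := by
  obtain ⟨q, rfl⟩ := hdvd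
  have hq : q ≠ 0 := by rintro rfl; simp at hn
  have hp : ∀ j : Fin q.primeFactorsList.length, (q.primeFactorsList[j]).Prime ∧
      q.primeFactorsList[j] ∣ q := fun j =>
    (Nat.mem_primeFactorsList hq).1 (List.getElem_mem j.2)
  refine ⟨q.primeFactorsList.length, fun o => o.elim d fun j => q.primeFactorsList[j], rfl, ?_, ?_, ?_⟩
  · rintro (_ | j)
    · exact hd.ne'
    · exact (hp j).1.ne_zero
  · rintro (_ | j)
    · exact dvd_rfl
    · exact hsf _ (hp j).1 ((hp j).2.mul_left d)
  · rw [Fintype.prod_option]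
    simp only [Option.elim]
    congr 1
    conv_rhs => rw [← Nat.prod_primeFactorsList hq]
    exact Fin.prod_univ_getElem _

lemma main {k : Type u} [Field k] {ι : Type} [Fintype ι] [DecidableEq ι] (m : ι → ℕ)
    [∀ i, NeZero (m i)] (i0 : ι) (hdv : ∀ i, m i ∣ m i0) :
    ∃ (K : Type u) (_ : Field K) (_ : Algebra k K)
      (ε : Type u) (_ : DivisionRing ε) (_ : Algebra K ε)
      (_ : Algebra k ε) (_ : IsScalarTower k K ε),
      Algebra.IsCentral K ε ∧
      Module.finrank K ε = (∏ i, m i) ^ 2 ∧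
      (∃ r : ℕ, 0 < r ∧
        Nonempty ((⨂[K] (_ : Fin (m i0)), ε) ≃ₐ[K] Matrix (Fin r) (Fin r) K)) ∧
      (∀ e : ℕ, 0 < e → e < m i0 → ∀ r : ℕ,
        ¬ Nonempty ((⨂[K] (_ : Fin e), ε) ≃ₐ[K] Matrix (Fin r) (Fin r) K)) ∧
      (∀ (D : Type u) [DivisionRing D] [Algebra k D] [Algebra.IsCentral k D]
        [FiniteDimensional k D], ∀ x : D ⊗[k] ε, x ≠ 0 → IsUnit x) := by
  obtain ⟨K, _, _, _, _, _, _⟩ := exists_K (m := m) (k := k)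
  have hnz : NoZeroDivisors (tw K (ff m k)) := dom_self (k := k) (emb K) emb_li den
  have : IsDomain (tw K (ff m k)) := NoZeroDivisors.to_isDomain _
  have : Module.Finite K (tw K (ff m k)) := finite_tw ff_coc
  obtain ⟨β, hβ0, hβ1, hβ⟩ := exists_beta (k := k) hdv
  have h1 := isCentral_tw (K := K) (ff_coc (m := m) (k := k))
  have h2 := finrank_tw (K := K) (ff_coc (m := m) (k := k))
  rw [card_Gr] at h2
  have h3 := tensor_split (K := K) ff_coc (Nat.pos_of_ne_zero (NeZero.ne (m i0))) hβ0 hβ1 hβ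
  have h4 := fun (e : ℕ) (he : 0 < e) (hei : e < m i0) (r : ℕ) => not_split (m := m) (k := k) (K := K) i0 (e := e) he hei r
  have h5 : ∀ (D : Type u) [DivisionRing D] [Algebra k D], NoZeroDivisors (tw K (ff m k) ⊗[k] D) := by
    intro D _ _
    exact dom_tensor (k := k) (emb K) emb_li den
  letI dr : DivisionRing (tw K (ff m k)) := divisionRingOfFiniteDimensional K (tw K (ff m k))
  refine ⟨K, inferInstance, inferInstance, tw K (ff m k), dr, inferInstance, inferInstance,
    inferInstance, h1, h2, h3, h4, ?_⟩
  intro D _ _ _ _ x hx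
  have := h5 D
  exact unit_tensor x hx

end S8

theorem statement8 {k : Type u} [Field k] (d n : ℕ) (hd : 0 < d) (hn : 0 < n)
    (hdvd : d ∣ n)
    -- the squarefree part of `n` divides `d`: every prime dividing `n` divides `d`
    (hsf : ∀ p : ℕ, p.Prime → p ∣ n → p ∣ d) :
    ∃ (K : Type u) (_ : Field K) (_ : Algebra k K)
      (ε : Type u) (_ : DivisionRing ε) (_ : Algebra K ε)
      (_ : Algebra k ε) (_ : IsScalarTower k K ε),
      -- `ε` is a central division algebra over `K` of degree `n`
      Algebra.IsCentral K ε ∧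
      Module.finrank K ε = n ^ 2 ∧
      -- the `d`-fold tensor power `ε^{⊗d}` is split ...
      (∃ r : ℕ, 0 < r ∧
        Nonempty ((⨂[K] (_ : Fin d), ε) ≃ₐ[K] Matrix (Fin r) (Fin r) K)) ∧
      -- ... and `ε^{⊗m}` is not split for `0 < m < d`,
      -- i.e. the Brauer class of `ε` has order exactly `d` in `Br(K)`
      (∀ m : ℕ, 0 < m → m < d → ∀ r : ℕ,
        ¬ Nonempty ((⨂[K] (_ : Fin m), ε) ≃ₐ[K] Matrix (Fin r) (Fin r) K)) ∧
      -- for every finite-dimensional central division algebra `D` over `k`,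
      -- the central simple `K`-algebra `D ⊗_k ε` is a division ring
      (∀ (D : Type u) [DivisionRing D] [Algebra k D] [Algebra.IsCentral k D]
        [FiniteDimensional k D], ∀ x : D ⊗[k] ε, x ≠ 0 → IsUnit x) := by
  obtain ⟨l, m, rfl, hm0, hmd, rfl⟩ := S8.exists_m d n hd hn hdvd hsf
  have : ∀ i, NeZero (m i) := fun i => ⟨hm0 i⟩
  exact S8.main m none hmd
end
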